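/- arXiv:1801.02182 — 2 statements merged into one kernel-verified Lean document; each statement's English description precedes it below -/
import Mathlib

section
/- ∫₀¹ [₂F₁(1/3,2/3;1|x)]²·(1−x)^{−1/2} dx = (9/√π)·[ (√3/64)·(Γ(1/3)/√π)⁹·₄F₃(1/6,1/3,1/3,1/2; 2/3,5/6,5/6 | 1) − (16/3)·(√π/Γ(1/3))⁹·₄F₃(1/2,2/3,2/3,5/6; 7/6,7/6,4/3 | 1) ]. -/
open Real MeasureTheory Set

/-- Modified Bessel function `I₀(t) = (1/π)∫₀^π exp(t cos θ) dθ`. -/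
noncomputable def I0 (t : ℝ) : ℝ := (1 / π) * ∫ θ in (0:ℝ)..π, exp (t * cos θ)

/-- Modified Bessel function `K₀(t) = ∫₀^∞ exp(−t cosh u) du`. -/
noncomputable def K0 (t : ℝ) : ℝ := ∫ u in Ioi (0:ℝ), exp (-(t * Real.cosh u))

/-- Rising factorial `(a)ₙ = a(a+1)⋯(a+n−1)`. -/
noncomputable def ris (a : ℝ) (n : ℕ) : ℝ := ∏ k ∈ Finset.range n, (a + k)

/-- Generalized hypergeometric series `ₚF_q(a; b | x)`. -/
noncomputable def pFq (a b : List ℝ) (x : ℝ) : ℝ :=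
  ∑' n : ℕ, ((a.map fun p => ris p n).prod / (b.map fun q => ris q n).prod) * x ^ n
    / (n.factorial : ℝ)


lemma ris_succ (a : ℝ) (n : ℕ) : ris a (n+1) = ris a n * (a + n) := by
  simp [ris, Finset.prod_range_succ]

lemma ris_zero (a : ℝ) : ris a 0 = 1 := by simp [ris]

lemma ris_pos {a : ℝ} (ha : 0 < a) (n : ℕ) : 0 < ris a n :=
  Finset.prod_pos fun k _ => by positivity

lemma ris_one (n : ℕ) : ris 1 n = n.factorial := by
  induction n with
  | zero => simp [ris]
  | succ n ih => rw [ris_succ, ih, Nat.factorial_succ]; push_cast; ring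

noncomputable def cA (n : ℕ) : ℝ := ris (1/2) n / n.factorial
noncomputable def av (b : ℝ) (n : ℕ) : ℝ := ris b n * ris (1-b) n / (n.factorial : ℝ)^2
noncomputable def bt (s : ℝ) : ℝ := ProbabilityTheory.beta s (1/2)

lemma cA_pos (n : ℕ) : 0 < cA n := div_pos (ris_pos (by norm_num) n) (by positivity)

lemma cA_succ (n : ℕ) : cA (n+1) = cA n * (n + 1/2) / (n+1) := by
  unfold cA
  rw [ris_succ, Nat.factorial_succ]
  have : (n.factorial : ℝ) ≠ 0 := by positivity
  push_cast
  field_simp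
  ring

lemma av_nonneg {b : ℝ} (h0 : 0 < b) (h1 : b < 1) (n : ℕ) : 0 ≤ av b n :=
  div_nonneg (mul_nonneg (ris_pos h0 n).le (ris_pos (by linarith) n).le) (by positivity)

lemma av_succ (b : ℝ) (n : ℕ) : av b (n+1) * ((n:ℝ)+1)^2 = av b n * ((n + b) * (n + 1 - b)) := by
  unfold av
  rw [ris_succ, ris_succ, Nat.factorial_succ]
  have : (n.factorial : ℝ) ≠ 0 := by positivity
  push_cast
  field_simp
  ring

lemma av_zero (b : ℝ) : av b 0 = 1 := by simp [av, ris]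

lemma av_le {b : ℝ} (h0 : 0 < b) (h1 : b < 1) (n : ℕ) : av b n * (n+1) ≤ 1 := by
  induction n with
  | zero => simp [av_zero]
  | succ n ih =>
    have h := av_succ b n
    have hn := av_nonneg h0 h1 n
    have hn' := av_nonneg h0 h1 (n+1)
    push_cast
    have key : ((n + b) * (n + 1 - b)) * ((n:ℝ)+2) ≤ ((n:ℝ)+1)^3 := by
      have : b*(1-b) ≤ 1/4 := by nlinarith [sq_nonneg (b-1/2)]
      have hn0 : (0:ℝ) ≤ n := by positivity
      nlinarith [mul_nonneg hn0 (sub_nonneg.2 this)]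
    have h2 : (av b (n+1) * ((n:ℝ)+1+1)) * ((n:ℝ)+1)^2 ≤ 1 * ((n:ℝ)+1)^2 := by
      calc (av b (n+1) * ((n:ℝ)+1+1)) * ((n:ℝ)+1)^2 = av b n * (((n + b) * (n + 1 - b)) * ((n:ℝ)+2)) := by
            linear_combination ((n:ℝ)+2) * h
        _ ≤ av b n * ((n:ℝ)+1)^3 := by gcongr
        _ = (av b n * (n+1)) * ((n:ℝ)+1)^2 := by ring
        _ ≤ _ := by gcongr
    exact le_of_mul_le_mul_right h2 (by positivity)

lemma bt_pos {s : ℝ} (hs : 0 < s) : 0 < bt s := ProbabilityTheory.beta_pos hs (by norm_num)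

lemma bt_succ {s : ℝ} (hs : 0 < s) : bt (s+1) = bt s * s / (s + 1/2) := by
  unfold bt ProbabilityTheory.beta
  rw [Gamma_add_one hs.ne', show s + 1 + 1/2 = (s + 1/2) + 1 by ring,
    Gamma_add_one (by positivity)]
  have : Gamma (s+1/2) ≠ 0 := (Gamma_pos_of_pos (by positivity)).ne'
  field_simp

lemma bt_lint {s : ℝ} (hs : 0 < s) :
    ∫⁻ t in Ioo (0:ℝ) 1, ENNReal.ofReal (t^(s-1) * (1-t)^(-(1/2):ℝ)) = ENNReal.ofReal (bt s) := by
  have h := ProbabilityTheory.lintegral_betaPDF_eq_one hs (show (0:ℝ) < 1/2 by norm_num)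
  rw [ProbabilityTheory.lintegral_betaPDF] at h
  have hb := bt_pos hs
  have h2 : ∀ t : ℝ, ENNReal.ofReal (1 / ProbabilityTheory.beta s (1/2) * t^(s-1) * (1-t)^((1/2:ℝ)-1)) =
      ENNReal.ofReal (1 / bt s) * ENNReal.ofReal (t^(s-1) * (1-t)^(-(1/2):ℝ)) := by
    intro t
    rw [← ENNReal.ofReal_mul (by positivity)]
    congr 1
    rw [bt, mul_assoc]; norm_num
  simp_rw [h2] at h
  rw [lintegral_const_mul _ (by fun_prop)] at h
  have h3 : ENNReal.ofReal (bt s) * ENNReal.ofReal (1 / bt s) = 1 := by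
    rw [← ENNReal.ofReal_mul hb.le]; simp [hb.ne']
  rw [← one_mul (∫⁻ _ in _, _), ← h3, mul_assoc, h, mul_one]

lemma asc_eval (a : ℝ) (n : ℕ) : (ascPochhammer ℝ n).eval a = ris a n := by
  induction n with
  | zero => simp [ris]
  | succ n ih => rw [ascPochhammer_succ_eval, ih, ris_succ]

lemma choose_half (n : ℕ) : Ring.choose ((1/2:ℝ) + n - 1) n = cA n := by
  rw [Ring.choose_eq_smul, Polynomial.descPochhammer_smeval_eq_ascPochhammer,
    Polynomial.ascPochhammer_smeval_eq_eval, asc_eval,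
    show (1/2:ℝ) + n - 1 - n + 1 = 1/2 by ring, cA, smul_eq_mul]
  field_simp

lemma cA_hasSum {y : ℝ} (h0 : 0 ≤ y) (h1 : y < 1) :
    HasSum (fun n => cA n * y^n) ((1-y)^(-(1/2):ℝ)) := by
  have h := (Real.one_div_one_sub_rpow_hasFPowerSeriesOnBall_zero (1/2)).hasSum (y := y) (by
    rw [Metric.mem_eball]; simp [edist_dist, abs_of_nonneg h0, h1])
  simp only [FormalMultilinearSeries.ofScalars_apply_eq, choose_half, zero_add, smul_eq_mul] at h
  rw [rpow_neg (by linarith), ← one_div]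
  exact h

lemma cA_tsum {y : ℝ} (h0 : 0 ≤ y) (h1 : y < 1) :
    ∑' n, ENNReal.ofReal (cA n * y^n) = ENNReal.ofReal ((1-y)^(-(1/2):ℝ)) := by
  rw [← (cA_hasSum h0 h1).tsum_eq, ENNReal.ofReal_tsum_of_nonneg _ (cA_hasSum h0 h1).summable]
  intro n
  exact mul_nonneg (cA_pos n).le (by positivity)


lemma cov_anti {f f' : ℝ → ℝ} {a b : ℝ} (hab : a < b) (hc : ContinuousOn f (Icc a b))
    (hd : ∀ x ∈ Ioo a b, HasDerivAt f (f' x) x) (hneg : ∀ x ∈ Ioo a b, f' x < 0)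
    (g : ℝ → ENNReal) :
    ∫⁻ m in Ioo (f b) (f a), g m = ∫⁻ x in Ioo a b, ENNReal.ofReal (-f' x) * g (f x) := by
  have hanti : StrictAntiOn f (Icc a b) := by
    apply strictAntiOn_of_deriv_neg (convex_Icc a b) hc
    intro x hx
    rw [interior_Icc] at hx
    rw [(hd x hx).deriv]; exact hneg x hx
  have himg : f '' Ioo a b = Ioo (f b) (f a) := by
    apply Subset.antisymm
    · rintro _ ⟨x, hx, rfl⟩
      exact ⟨hanti (Ioo_subset_Icc_self hx) (right_mem_Icc.2 hab.le) hx.2,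
        hanti (left_mem_Icc.2 hab.le) (Ioo_subset_Icc_self hx) hx.1⟩
    · exact intermediate_value_Ioo' hab.le hc
  rw [← himg, lintegral_image_eq_lintegral_abs_deriv_mul measurableSet_Ioo
    (fun x hx => (hd x hx).hasDerivWithinAt) (hanti.injOn.mono Ioo_subset_Icc_self)]
  apply setLIntegral_congr_fun measurableSet_Ioo
  intro x hx
  simp only [abs_of_neg (hneg x hx)]

lemma rpow_half_sq {c : ℝ} (hc : 0 < c) : (c^2)^(-(1/2):ℝ) = 1 / c := by
  rw [← rpow_natCast, ← rpow_mul hc.le]; norm_num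
  rw [rpow_neg_one]

lemma core {S T : ℝ} (hS : 0 < S) (hST : S < T) (hT : T < 1) :
    ∫⁻ r in Ioo T 1, ENNReal.ofReal ((1+r) * (r*(r-T)*(r-S)*(1-r*T)*(1-r*S))^(-(1/2):ℝ)) =
    ∫⁻ v in Ioo T 1, ENNReal.ofReal (((v-T)*(v-S)*(v-T*S)*(1-v))^(-(1/2):ℝ)) := by
  have hT0 : 0 < T := hS.trans hST
  have hS1 : S < 1 := hST.trans hT
  have hTS : T * S < T := by nlinarith
  set g : ℝ → ENNReal := fun m =>
    ENNReal.ofReal ((m*((1-T)^2-T*m)*((1-S)^2-S*m))^(-(1/2):ℝ)) with hg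
  have h1 : ∫⁻ m in Ioo 0 ((1-T)^2/T), g m = ∫⁻ r in Ioo T 1,
      ENNReal.ofReal ((1+r) * (r*(r-T)*(r-S)*(1-r*T)*(1-r*S))^(-(1/2):ℝ)) := by
    have := cov_anti (f := fun r => (1-r)^2/r) (f' := fun r => -((1-r)*(1+r)/r^2)) hT
      (by
        apply ContinuousOn.div (by fun_prop) (by fun_prop)
        intro x hx; exact (hT0.trans_le hx.1).ne')
      (by
        intro x hx
        have hx0 : x ≠ 0 := (hT0.trans hx.1).ne'
        have := (((hasDerivAt_id x).const_sub 1).pow 2).div (hasDerivAt_id x) hx0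
        refine HasDerivAt.congr_deriv this ?_
        simp
        field_simp
        ring)
      (by
        intro x hx
        have hx0 : 0 < x := (hT0.trans hx.1)
        have : 0 < 1 - x := by linarith [hx.2]
        rw [neg_lt_zero]; positivity) g
    simp only [sub_self, ne_eq, OfNat.ofNat_ne_zero, not_false_eq_true, zero_pow, zero_div] at this
    rw [this]
    apply setLIntegral_congr_fun measurableSet_Ioo
    intro r hr
    have hr0 : 0 < r := hT0.trans hr.1
    have e1 : 0 < 1 - r := by linarith [hr.2]
    have e2 : 0 < r - T := by linarith [hr.1]
    have e3 : 0 < r - S := by linarith [hr.1]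
    have e4 : 0 < 1 - r*T := by nlinarith
    have e5 : 0 < 1 - r*S := by nlinarith
    simp only [hg, neg_neg]
    rw [← ENNReal.ofReal_mul (by positivity)]
    congr 1
    have : (1-r)^2/r*((1-T)^2-T*((1-r)^2/r))*((1-S)^2-S*((1-r)^2/r)) =
      ((1-r)/r^2)^2 * (r*(r-T)*(r-S)*(1-r*T)*(1-r*S)) := by
      field_simp
      ring
    rw [this, mul_rpow (by positivity) (by positivity), rpow_half_sq (by positivity)]
    field_simp
  have h2 : ∫⁻ m in Ioo 0 ((1-T)^2/T), g m = ∫⁻ v in Ioo T 1,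
      ENNReal.ofReal (((v-T)*(v-S)*(v-T*S)*(1-v))^(-(1/2):ℝ)) := by
    have e0 : 0 < 1 - T := by linarith
    have e0' : 0 < 1 - S := by linarith
    have e0'' : 0 < 1 - T*S := by nlinarith
    have := cov_anti (f := fun v => (1-T)*(1-S)*(1-v)/(v-T*S))
      (f' := fun v => -((1-T)*(1-S)*(1-T*S)/(v-T*S)^2)) hT
      (by
        apply ContinuousOn.div (by fun_prop) (by fun_prop)
        intro x hx; have := hx.1; exact (by linarith : 0 < x - T*S).ne')
      (by
        intro x hx
        have hx0 : x - T*S ≠ 0 := by have := hx.1; exact (by linarith : 0 < x - T*S).ne'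
        have := (((hasDerivAt_id x).const_sub 1).const_mul ((1-T)*(1-S))).div
          ((hasDerivAt_id x).sub_const (T*S)) hx0
        refine HasDerivAt.congr_deriv this ?_
        simp
        field_simp
        ring)
      (by
        intro x hx
        have hx0 : 0 < x - T*S := by have := hx.1; linarith
        rw [neg_lt_zero]; positivity) g
    have e : (1-T)*(1-S)*(1-T)/(T-T*S) = (1-T)^2/T := by
      have : T - T*S = T*(1-S) := by ring
      rw [this]; field_simp
    simp only [sub_self, mul_zero, zero_div] at this
    rw [e] at this
    rw [this]
    apply setLIntegral_congr_fun measurableSet_Ioo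
    intro v hv
    have e1 : 0 < 1 - v := by linarith [hv.2]
    have e2 : 0 < v - T := by linarith [hv.1]
    have e3 : 0 < v - S := by linarith [hv.1]
    have e4 : 0 < v - T*S := by linarith
    simp only [hg, neg_neg]
    rw [← ENNReal.ofReal_mul (by positivity)]
    congr 1
    have : (1-T)*(1-S)*(1-v)/(v-T*S)*((1-T)^2-T*((1-T)*(1-S)*(1-v)/(v-T*S)))*
        ((1-S)^2-S*((1-T)*(1-S)*(1-v)/(v-T*S))) =
      ((1-T)*(1-S)*(1-T*S)/(v-T*S)^2)^2 * ((v-T)*(v-S)*(v-T*S)*(1-v)) := by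
      field_simp
      ring
    rw [this, mul_rpow (by positivity) (by positivity), rpow_half_sq (by positivity)]
    field_simp
  rw [← h1, h2]

lemma swap3 (K : ℝ → ℝ → ℝ → ENNReal) (hK : Measurable fun p : ℝ × ℝ × ℝ => K p.1 p.2.1 p.2.2) :
    ∫⁻ r in Ioo (0:ℝ) 1, ∫⁻ T in Ioo 0 r, ∫⁻ S in Ioo 0 r, K r T S =
    ∫⁻ T in Ioo (0:ℝ) 1, ∫⁻ S in Ioo (0:ℝ) 1, ∫⁻ r in Ioo (max T S) 1, K r T S := by
  classical
  set K' : ℝ → ℝ → ℝ → ENNReal := fun r T S =>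
    if (0 < T ∧ T < r) ∧ (0 < S ∧ S < r) ∧ r < 1 then K r T S else 0 with hK'
  have hm : Measurable fun p : ℝ × ℝ × ℝ => K' p.1 p.2.1 p.2.2 := by
    have m1 : Measurable fun p : ℝ × ℝ × ℝ => p.1 := by fun_prop
    have m2 : Measurable fun p : ℝ × ℝ × ℝ => p.2.1 := by fun_prop
    have m3 : Measurable fun p : ℝ × ℝ × ℝ => p.2.2 := by fun_prop
    have ms : MeasurableSet {p : ℝ × ℝ × ℝ |
        (0 < p.2.1 ∧ p.2.1 < p.1) ∧ (0 < p.2.2 ∧ p.2.2 < p.1) ∧ p.1 < 1} :=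
      ((measurableSet_lt measurable_const m2).inter (measurableSet_lt m2 m1)).inter
        (((measurableSet_lt measurable_const m3).inter (measurableSet_lt m3 m1)).inter
          (measurableSet_lt m1 measurable_const))
    exact Measurable.ite ms hK measurable_const
  have hl : ∫⁻ r in Ioo (0:ℝ) 1, ∫⁻ T in Ioo 0 r, ∫⁻ S in Ioo 0 r, K r T S =
      ∫⁻ r, ∫⁻ T, ∫⁻ S, K' r T S := by
    rw [← lintegral_indicator measurableSet_Ioo]
    congr 1; ext r
    by_cases hr : r ∈ Ioo (0:ℝ) 1
    · rw [indicator_of_mem hr, ← lintegral_indicator measurableSet_Ioo]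
      congr 1; ext T
      by_cases hT : T ∈ Ioo 0 r
      · rw [indicator_of_mem hT, ← lintegral_indicator measurableSet_Ioo]
        congr 1; ext S
        by_cases hS : S ∈ Ioo 0 r
        · rw [indicator_of_mem hS, hK']
          simp only
          rw [if_pos ⟨hT, hS, hr.2⟩]
        · rw [indicator_of_notMem hS, hK']
          simp only
          rw [if_neg fun h => hS h.2.1]
      · rw [indicator_of_notMem hT]
        simp only [hK']
        simp [show ¬ (0 < T ∧ T < r) from hT]
    · rw [indicator_of_notMem hr]
      have : ∀ T S, K' r T S = 0 := by
        intro T S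
        simp only [hK']
        rw [if_neg]
        rintro ⟨h1, h2, h3⟩
        exact hr ⟨h1.1.trans h1.2, h3⟩
      simp [this]
  have hr : ∫⁻ T in Ioo (0:ℝ) 1, ∫⁻ S in Ioo (0:ℝ) 1, ∫⁻ r in Ioo (max T S) 1, K r T S =
      ∫⁻ T, ∫⁻ S, ∫⁻ r, K' r T S := by
    rw [← lintegral_indicator measurableSet_Ioo]
    congr 1; ext T
    by_cases hT : T ∈ Ioo (0:ℝ) 1
    · rw [indicator_of_mem hT, ← lintegral_indicator measurableSet_Ioo]
      congr 1; ext S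
      by_cases hS : S ∈ Ioo (0:ℝ) 1
      · rw [indicator_of_mem hS, ← lintegral_indicator measurableSet_Ioo]
        congr 1; ext r
        by_cases hr : r ∈ Ioo (max T S) 1
        · rw [indicator_of_mem hr, hK']
          simp only
          rw [if_pos ⟨⟨hT.1, (le_max_left _ _).trans_lt hr.1⟩, ⟨hS.1, (le_max_right _ _).trans_lt hr.1⟩, hr.2⟩]
        · rw [indicator_of_notMem hr, hK']
          simp only
          rw [if_neg fun h => hr ⟨max_lt h.1.2 h.2.1.2, h.2.2⟩]
      · rw [indicator_of_notMem hS]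
        have : ∀ r, K' r T S = 0 := by
          intro r
          simp only [hK']
          rw [if_neg]
          rintro ⟨h1, h2, h3⟩
          exact hS ⟨h2.1, h2.2.trans h3⟩
        simp [this]
    · rw [indicator_of_notMem hT]
      have : ∀ r S, K' r T S = 0 := by
        intro r S
        simp only [hK']
        rw [if_neg]
        rintro ⟨h1, h2, h3⟩
        exact hT ⟨h1.1, h1.2.trans h3⟩
      simp [this]
  rw [hl, hr, lintegral_lintegral_swap]
  · congr 1; ext T
    rw [lintegral_lintegral_swap]
    apply Measurable.aemeasurable
    have hf : Measurable (fun p : ℝ × ℝ => (p.1, T, p.2)) := by fun_prop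
    exact hm.comp hf
  · apply Measurable.aemeasurable
    have : Measurable fun q : (ℝ × ℝ) × ℝ => K' q.1.1 q.1.2 q.2 :=
      hm.comp (show Measurable (fun q : (ℝ × ℝ) × ℝ => (q.1.1, q.1.2, q.2)) by fun_prop)
    exact this.lintegral_prod_right'


lemma scal {r s : ℝ} (hr : 0 < r) (hs : 0 < s) :
    ∫⁻ T in Ioo 0 r, ENNReal.ofReal (T^(s-1) * (1-T/r)^(-(1/2):ℝ)) =
      ENNReal.ofReal (r^s * bt s) := by
  have himg : (fun t => r * t) '' Ioo 0 1 = Ioo 0 r := by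
    have := Set.image_mul_left_Ioo hr 0 1
    simpa using this
  rw [← himg, lintegral_image_eq_lintegral_abs_deriv_mul measurableSet_Ioo (f' := fun _ => r)
    (fun x _ => by simpa using ((hasDerivAt_id x).const_mul r).hasDerivWithinAt)
    (fun x _ y _ h => mul_left_cancel₀ hr.ne' h)]
  rw [ENNReal.ofReal_mul (by positivity), ← bt_lint hs, ← lintegral_const_mul _ (by fun_prop)]
  apply setLIntegral_congr_fun measurableSet_Ioo
  intro t ht
  simp only
  rw [← ENNReal.ofReal_mul (by positivity), ← ENNReal.ofReal_mul (by positivity)]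
  congr 1
  rw [abs_of_pos hr, mul_rpow hr.le ht.1.le, mul_div_cancel_left₀ _ hr.ne', rpow_sub_one hr.ne']
  field_simp

noncomputable def qq (l : ℝ) : ℝ := 1/(l-1/2) + 1/(l+1/2)

lemma pow_lint {p : ℝ} (hp : -1 < p) :
    ∫⁻ r in Ioo (0:ℝ) 1, ENNReal.ofReal (r^p) = ENNReal.ofReal (1/(p+1)) := by
  have hi : IntervalIntegrable (fun r : ℝ => r^p) volume 0 1 :=
    intervalIntegral.intervalIntegrable_rpow' hp
  have h := integral_rpow (a := 0) (b := 1) (r := p) (Or.inl hp)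
  rw [intervalIntegral.integral_of_le zero_le_one, integral_Ioc_eq_integral_Ioo] at h
  rw [intervalIntegrable_iff_integrableOn_Ioo_of_le zero_le_one] at hi
  rw [← ofReal_integral_eq_lintegral_ofReal hi, h, one_rpow, zero_rpow (by linarith), sub_zero]
  filter_upwards [ae_restrict_mem measurableSet_Ioo] with x hx
  exact rpow_nonneg hx.1.le _

lemma qq_lint {l : ℝ} (hl : 1/2 < l) :
    ∫⁻ r in Ioo (0:ℝ) 1, ENNReal.ofReal (r^l * ((1+r) * r^(-(3/2):ℝ))) = ENNReal.ofReal (qq l) := by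
  rw [qq, ENNReal.ofReal_add (by apply one_div_nonneg.2; linarith) (by apply one_div_nonneg.2; linarith)]
  have e1 := pow_lint (p := l - 3/2) (by linarith)
  have e2 := pow_lint (p := l - 1/2) (by linarith)
  rw [show l - 3/2+1 = l - 1/2 by ring] at e1
  rw [show l - 1/2+1 = l + 1/2 by ring] at e2
  rw [← e1, ← e2, ← lintegral_add_left (by fun_prop)]
  apply setLIntegral_congr_fun measurableSet_Ioo
  intro r hr
  simp only
  rw [← ENNReal.ofReal_add (rpow_nonneg hr.1.le _) (rpow_nonneg hr.1.le _)]
  congr 1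
  have a1 : r^(l-3/2) = r^l * r^(-(3/2):ℝ) := by rw [← rpow_add hr.1]; congr 1
  have a2 : r^(l-1/2) = r^l * r^(-(3/2):ℝ) * r := by
    rw [← a1, ← rpow_add_one hr.1.ne']; congr 1; ring
  rw [a1, a2]; ring

noncomputable def fL (b r T : ℝ) : ENNReal :=
  ENNReal.ofReal ((1-r*T)^(-(1/2):ℝ)) * ENNReal.ofReal (T^(b-1) * (1-T/r)^(-(1/2):ℝ))
noncomputable def gR (b v T : ℝ) : ENNReal := ENNReal.ofReal (T^(b-1) * (1-T/v)^(-(1/2):ℝ))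
noncomputable def KL (b r T S : ℝ) : ENNReal :=
  fL b r T * fL b r S * ENNReal.ofReal ((1+r) * r^(-(3/2):ℝ))
noncomputable def KR (b v T S : ℝ) : ENNReal :=
  gR b v T * gR b v S * ENNReal.ofReal ((1-T*S/v)^(-(1/2):ℝ)) *
    ENNReal.ofReal ((1-v)^(-(1/2):ℝ) * v^(-(3/2):ℝ))

lemma H_eq {b r : ℝ} (hb : 0 < b) (hr : r ∈ Ioo (0:ℝ) 1) :
    ∑' j : ℕ, ENNReal.ofReal (cA j * bt (b+j) * r^(b+2*j)) = ∫⁻ T in Ioo 0 r, fL b r T := by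
  have h : ∀ T ∈ Ioo 0 r, fL b r T =
      ∑' j : ℕ, ENNReal.ofReal (cA j * r^j) * ENNReal.ofReal (T^(b+j-1) * (1-T/r)^(-(1/2):ℝ)) := by
    intro T hT
    rw [fL, ← cA_tsum (mul_nonneg hr.1.le hT.1.le) (by nlinarith [hr.1, hr.2, hT.1, hT.2]),
      ← ENNReal.tsum_mul_right]
    congr 1; ext j
    have := cA_pos j
    have := hr.1
    have := hT.1
    rw [← ENNReal.ofReal_mul (by positivity), ← ENNReal.ofReal_mul (by positivity)]
    congr 1
    rw [show b + j - 1 = (b - 1) + (j:ℝ) by ring, rpow_add hT.1, rpow_natCast, mul_pow]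
    ring
  rw [setLIntegral_congr_fun measurableSet_Ioo h, lintegral_tsum (by intro i; fun_prop)]
  congr 1; ext j
  rw [lintegral_const_mul _ (by fun_prop), scal hr.1 (by positivity)]
  have := cA_pos j
  have := hr.1
  rw [← ENNReal.ofReal_mul (by positivity)]
  congr 1
  rw [show b + 2*j = (b+j) + (j:ℝ) by ring, rpow_add hr.1, rpow_natCast]
  ring

lemma left_eq {b : ℝ} (hb : 1/4 < b) :
    ∑' j : ℕ, ∑' k : ℕ, ENNReal.ofReal (cA j * bt (b+j) * (cA k * bt (b+k)) * qq (2*b+2*j+2*k)) =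
    ∫⁻ r in Ioo (0:ℝ) 1, ∫⁻ T in Ioo 0 r, ∫⁻ S in Ioo 0 r, KL b r T S := by
  have hb0 : 0 < b := by linarith
  have h1 : ∀ r ∈ Ioo (0:ℝ) 1, (∫⁻ T in Ioo 0 r, ∫⁻ S in Ioo 0 r, KL b r T S) =
      ∑' j : ℕ, ∑' k : ℕ, ENNReal.ofReal (cA j * bt (b+j) * (cA k * bt (b+k))) *
        ENNReal.ofReal (r^(2*b+2*j+2*k) * ((1+r) * r^(-(3/2):ℝ))) := by
    intro r hr
    have e : (∫⁻ T in Ioo 0 r, ∫⁻ S in Ioo 0 r, KL b r T S) =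
        (∫⁻ T in Ioo 0 r, fL b r T) * (∫⁻ T in Ioo 0 r, fL b r T) * ENNReal.ofReal ((1+r) * r^(-(3/2):ℝ)) := by
      have m : Measurable fun T => fL b r T := by unfold fL; fun_prop
      have : ∀ T, ∫⁻ S in Ioo 0 r, KL b r T S = fL b r T * ((∫⁻ S in Ioo 0 r, fL b r S) * ENNReal.ofReal ((1+r) * r^(-(3/2):ℝ))) := by
        intro T
        unfold KL
        rw [lintegral_mul_const _ (by fun_prop), lintegral_const_mul _ m, mul_assoc]
      simp_rw [this]
      rw [lintegral_mul_const _ m, mul_assoc]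
    rw [e, ← H_eq hb0 hr, ← ENNReal.tsum_mul_right, ← ENNReal.tsum_mul_right]
    congr 1; ext j
    rw [← ENNReal.tsum_mul_left, ← ENNReal.tsum_mul_right]
    congr 1; ext k
    have := cA_pos j
    have := cA_pos k
    have := bt_pos (show 0 < b + j by positivity)
    have := bt_pos (show 0 < b + k by positivity)
    have := hr.1
    rw [← ENNReal.ofReal_mul (by positivity), ← ENNReal.ofReal_mul (by positivity),
      ← ENNReal.ofReal_mul (by positivity)]
    congr 1
    rw [show 2*b+2*j+2*k = (b+2*j) + (b+2*k) by ring, rpow_add hr.1 (b+2*j) (b+2*k)]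
    ring
  rw [setLIntegral_congr_fun measurableSet_Ioo h1, lintegral_tsum]
  · congr 1; ext j
    rw [lintegral_tsum (by intro i; fun_prop)]
    congr 1; ext k
    have := cA_pos j
    have := cA_pos k
    have := bt_pos (show 0 < b + j by positivity)
    have := bt_pos (show 0 < b + k by positivity)
    rw [lintegral_const_mul _ (by fun_prop), qq_lint, ENNReal.ofReal_mul (by positivity)]
    have : (0:ℝ) ≤ j := by positivity
    have : (0:ℝ) ≤ k := by positivity
    linarith
  · intro j
    apply Measurable.aemeasurable
    exact Measurable.tsum (by intro i; fun_prop)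

lemma right_eq {b : ℝ} (hb : 1/4 < b) :
    ∑' n : ℕ, ENNReal.ofReal (cA n * bt (b+n)^2 * bt (2*b+n-1/2)) =
    ∫⁻ r in Ioo (0:ℝ) 1, ∫⁻ T in Ioo 0 r, ∫⁻ S in Ioo 0 r, KR b r T S := by
  have hb0 : 0 < b := by linarith
  have h1 : ∀ v ∈ Ioo (0:ℝ) 1, (∫⁻ T in Ioo 0 v, ∫⁻ S in Ioo 0 v, KR b v T S) =
      ∑' n : ℕ, ENNReal.ofReal (cA n * bt (b+n)^2) *
        ENNReal.ofReal (v^(2*b+n-1/2-1) * (1-v)^(-(1/2):ℝ)) := by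
    intro v hv
    have e1 : ∀ T ∈ Ioo 0 v, ∀ S ∈ Ioo 0 v, KR b v T S =
      ∑' n : ℕ, gR (b+n) v T * gR (b+n) v S * ENNReal.ofReal (cA n * v^(-(n:ℝ)-3/2) * (1-v)^(-(1/2):ℝ)) := by
      intro T hT S hS
      have v0 := hv.1
      have T0 := hT.1
      have S0 := hS.1
      have := div_lt_one v0 |>.2 hT.2
      have T1 : 0 < 1 - T/v := by linarith
      have := div_lt_one v0 |>.2 hS.2
      have S1 : 0 < 1 - S/v := by linarith
      have v1 : 0 < 1 - v := by linarith [hv.2]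
      unfold KR
      rw [← cA_tsum (y := T*S/v) (by positivity) (by
        rw [div_lt_one v0]; nlinarith [hT.2, hS.2, hv.2]), ← ENNReal.tsum_mul_left, ← ENNReal.tsum_mul_right]
      congr 1; ext n
      have := cA_pos n
      unfold gR
      rw [← ENNReal.ofReal_mul (by positivity), ← ENNReal.ofReal_mul (by positivity),
        ← ENNReal.ofReal_mul (by positivity), ← ENNReal.ofReal_mul (by positivity),
        ← ENNReal.ofReal_mul (by positivity)]
      congr 1
      rw [show b + n - 1 = (b - 1) + (n:ℝ) by ring, rpow_add hT.1, rpow_add hS.1,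
        show -(n:ℝ)-3/2 = -(3/2) - (n:ℝ) by ring, rpow_sub v0, rpow_natCast, rpow_natCast, rpow_natCast,
        div_pow, mul_pow]
      ring
    have e2 : (∫⁻ T in Ioo 0 v, ∫⁻ S in Ioo 0 v, KR b v T S) = ∫⁻ T in Ioo 0 v, ∑' n : ℕ,
        gR (b+n) v T * ((∫⁻ S in Ioo 0 v, gR (b+n) v S) * ENNReal.ofReal (cA n * v^(-(n:ℝ)-3/2) * (1-v)^(-(1/2):ℝ))) := by
      apply setLIntegral_congr_fun measurableSet_Ioo
      intro T hT
      simp only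
      rw [setLIntegral_congr_fun measurableSet_Ioo (e1 T hT), lintegral_tsum (by intro i; unfold gR; fun_prop)]
      congr 1; ext n
      rw [lintegral_mul_const _ (by unfold gR; fun_prop), lintegral_const_mul _ (by unfold gR; fun_prop), mul_assoc]
    rw [e2, lintegral_tsum (by intro i; unfold gR; fun_prop)]
    congr 1; ext n
    rw [lintegral_mul_const _ (by unfold gR; fun_prop)]
    unfold gR
    rw [scal hv.1 (by positivity)]
    have := cA_pos n
    have := bt_pos (show 0 < b + n by positivity)
    have := hv.1
    rw [← ENNReal.ofReal_mul (by positivity), ← ENNReal.ofReal_mul (by positivity),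
      ← ENNReal.ofReal_mul (by positivity)]
    congr 1
    rw [show 2*b+n-1/2-1 = (b+n) + (b+n) + (-(n:ℝ)-3/2) by ring, rpow_add hv.1 ((b+n)+(b+n)), rpow_add hv.1 (b+n) (b+n)]
    ring
  rw [setLIntegral_congr_fun measurableSet_Ioo h1, lintegral_tsum (by intro i; fun_prop)]
  congr 1; ext n
  have := cA_pos n
  have := bt_pos (show 0 < b + n by positivity)
  rw [lintegral_const_mul _ (by fun_prop), bt_lint, ENNReal.ofReal_mul (by positivity)]
  have : (0:ℝ) ≤ n := by positivity
  linarith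

lemma KL_symm (b r T S : ℝ) : KL b r T S = KL b r S T := by
  unfold KL; rw [mul_comm (fL b r T)]
lemma KR_symm (b r T S : ℝ) : KR b r T S = KR b r S T := by
  unfold KR; rw [mul_comm (gR b r T), mul_comm T S]

lemma cube_half {r : ℝ} (hr : 0 < r) : r^(-(3/2):ℝ) = (r^3)^(-(1/2):ℝ) := by
  rw [← rpow_natCast, ← rpow_mul hr.le]; norm_num

lemma inner_eq {b S T : ℝ} (hS : 0 < S) (hST : S < T) (hT : T < 1) :
    ∫⁻ r in Ioo T 1, KL b r T S = ∫⁻ r in Ioo T 1, KR b r T S := by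
  have hT0 : 0 < T := hS.trans hST
  have l1 : ∀ r ∈ Ioo T 1, KL b r T S = ENNReal.ofReal (T^(b-1)*S^(b-1)) *
      ENNReal.ofReal ((1+r) * (r*(r-T)*(r-S)*(1-r*T)*(1-r*S))^(-(1/2):ℝ)) := by
    intro r hr
    have hr0 : 0 < r := hT0.trans hr.1
    have e2 : 0 < r - T := by linarith [hr.1]
    have e3 : 0 < r - S := by linarith [hr.1]
    have e4 : 0 < 1 - r*T := by nlinarith [hr.2]
    have e5 : 0 < 1 - r*S := by nlinarith [hr.2]
    have t1 : 1 - T/r = (r-T)/r := by field_simp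
    have t2 : 1 - S/r = (r-S)/r := by field_simp
    unfold KL fL
    rw [t1, t2]
    rw [← ENNReal.ofReal_mul (by positivity), ← ENNReal.ofReal_mul (by positivity),
        ← ENNReal.ofReal_mul (by positivity), ← ENNReal.ofReal_mul (by positivity),
        ← ENNReal.ofReal_mul (by positivity)]
    congr 1
    have : r*(r-T)*(r-S)*(1-r*T)*(1-r*S) = (1-r*T)*((r-T)/r)*(1-r*S)*((r-S)/r)*r^3 := by
      field_simp
    rw [this, mul_rpow (by positivity) (by positivity), mul_rpow (by positivity) (by positivity),
      mul_rpow (by positivity) (by positivity), mul_rpow (by positivity) (by positivity), cube_half hr0]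
    ring
  have l2 : ∀ r ∈ Ioo T 1, KR b r T S = ENNReal.ofReal (T^(b-1)*S^(b-1)) *
      ENNReal.ofReal (((r-T)*(r-S)*(r-T*S)*(1-r))^(-(1/2):ℝ)) := by
    intro r hr
    have hr0 : 0 < r := hT0.trans hr.1
    have e2 : 0 < r - T := by linarith [hr.1]
    have e3 : 0 < r - S := by linarith [hr.1]
    have e4 : 0 < r - T*S := by nlinarith [hr.1]
    have e5 : 0 < 1 - r := by linarith [hr.2]
    have t1 : 1 - T/r = (r-T)/r := by field_simp
    have t2 : 1 - S/r = (r-S)/r := by field_simp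
    have t3 : 1 - T*S/r = (r-T*S)/r := by field_simp
    unfold KR gR
    rw [t1, t2, t3]
    rw [← ENNReal.ofReal_mul (by positivity), ← ENNReal.ofReal_mul (by positivity),
        ← ENNReal.ofReal_mul (by positivity),
        ← ENNReal.ofReal_mul (by positivity)]
    congr 1
    have : (r-T)*(r-S)*(r-T*S)*(1-r) = ((r-T)/r)*((r-S)/r)*((r-T*S)/r)*(1-r)*r^3 := by
      field_simp
    rw [this, mul_rpow (by positivity) (by positivity), mul_rpow (by positivity) (by positivity),
      mul_rpow (by positivity) (by positivity), mul_rpow (by positivity) (by positivity), cube_half hr0]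
    ring
  rw [setLIntegral_congr_fun measurableSet_Ioo l1, setLIntegral_congr_fun measurableSet_Ioo l2,
    lintegral_const_mul _ (by fun_prop), lintegral_const_mul _ (by fun_prop), core hS hST hT]

lemma partB {b : ℝ} (hb : 1/4 < b) :
    ∑' j : ℕ, ∑' k : ℕ, ENNReal.ofReal (cA j * bt (b+j) * (cA k * bt (b+k)) * qq (2*b+2*j+2*k)) =
    ∑' n : ℕ, ENNReal.ofReal (cA n * bt (b+n)^2 * bt (2*b+n-1/2)) := by
  rw [left_eq hb, right_eq hb, swap3 (KL b) (by unfold KL fL; fun_prop),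
    swap3 (KR b) (by unfold KR gR; fun_prop)]
  apply setLIntegral_congr_fun measurableSet_Ioo
  intro T hT
  simp only
  apply lintegral_congr_ae
  have hne : ∀ᵐ S ∂(volume.restrict (Ioo (0:ℝ) 1)), S ≠ T :=
    ae_restrict_of_ae (by simp [ae_iff])
  filter_upwards [ae_restrict_mem measurableSet_Ioo, hne] with S hS hne
  rcases lt_or_gt_of_ne hne with h | h
  · rw [max_eq_left h.le, inner_eq hS.1 h hT.2]
  · simp_rw [KL_symm b _ T S, KR_symm b _ T S]
    rw [max_eq_right h.le, inner_eq hT.1 h hS.2]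


noncomputable def FF (b x : ℝ) : ℝ := ∑' n : ℕ, av b n * x^n
noncomputable def GG (b t : ℝ) : ℝ := FF b (cos (t/2)^2)

lemma av_le_one {b : ℝ} (h0 : 0 < b) (h1 : b < 1) (n : ℕ) : av b n ≤ 1/(n+1) := by
  rw [le_div_iff₀ (by positivity)]; exact av_le h0 h1 n

lemma FF_summable {b : ℝ} (h0 : 0 < b) (h1 : b < 1) {x : ℝ} (hx0 : 0 ≤ x) (hx1 : x < 1) :
    Summable fun n => av b n * x^n := by
  refine Summable.of_nonneg_of_le (fun n => mul_nonneg (av_nonneg h0 h1 n) (by positivity))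
    (fun n => ?_) (summable_geometric_of_lt_one hx0 hx1)
  have := av_le_one h0 h1 n
  have h2 : 1/((n:ℝ)+1) ≤ 1 := by rw [div_le_one (by positivity)]; linarith [Nat.cast_nonneg (α := ℝ) n]
  calc av b n * x^n ≤ 1 * x^n := by gcongr; linarith
    _ = _ := one_mul _

lemma FF_nonneg {b : ℝ} (h0 : 0 < b) (h1 : b < 1) {x : ℝ} (hx0 : 0 ≤ x) : 0 ≤ FF b x :=
  tsum_nonneg fun n => mul_nonneg (av_nonneg h0 h1 n) (by positivity)

lemma FF_le {b : ℝ} (h0 : 0 < b) (h1 : b < 1) {x : ℝ} (hx0 : 0 ≤ x) (hx1 : x < 1) :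
    FF b x ≤ 8 * (1-x)^(-(1/8):ℝ) := by
  have hs := FF_summable h0 h1 hx0 hx1
  have hl := Real.hasSum_pow_div_log_of_abs_lt_one (x := x) (by rwa [abs_of_nonneg hx0])
  have e1 : FF b x ≤ 1 + -log (1-x) := by
    rw [FF, hs.tsum_eq_zero_add, av_zero, ← hl.tsum_eq]
    simp only [pow_zero, mul_one]
    gcongr with n
    · exact (summable_nat_add_iff 1).2 hs
    · exact hl.summable
    · have := av_le_one h0 h1 (n+1)
      have h2 : 1/(((n+1:ℕ):ℝ)+1) ≤ 1/((n:ℝ)+1) := by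
        push_cast
        gcongr
        linarith
      calc av b (n+1) * x^(n+1) ≤ (1/((n:ℝ)+1)) * x^(n+1) := by gcongr; linarith
        _ = _ := by ring
  have hp : 0 < 1 - x := by linarith
  have e2 := Real.log_le_sub_one_of_pos (rpow_pos_of_pos hp (-(1/8)))
  rw [log_rpow hp] at e2
  linarith

lemma FF_meas (b : ℝ) : Measurable (FF b) := Measurable.tsum (by intro i; fun_prop)

lemma GG_meas (b : ℝ) : Measurable (GG b) := (FF_meas b).comp (by fun_prop)

lemma cossq_lt {t : ℝ} (ht : t ∈ Ioc 0 π) : (t/π)^2 ≤ 1 - cos (t/2)^2 := by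
  have h := Real.mul_le_sin (x := t/2) (by linarith [ht.1]) (by linarith [ht.2])
  have : 2/π*(t/2) = t/π := by ring
  rw [this] at h
  have : 0 ≤ t/π := div_nonneg ht.1.le pi_pos.le
  have := sin_sq_add_cos_sq (t/2)
  nlinarith

lemma cossq_lt_one {t : ℝ} (ht : t ∈ Ioc 0 π) : cos (t/2)^2 < 1 := by
  have := cossq_lt ht
  have : 0 < (t/π)^2 := by have := div_pos ht.1 pi_pos; positivity
  linarith

lemma GG_nonneg {b : ℝ} (h0 : 0 < b) (h1 : b < 1) (t : ℝ) : 0 ≤ GG b t := FF_nonneg h0 h1 (sq_nonneg _)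

lemma GG_le {b : ℝ} (h0 : 0 < b) (h1 : b < 1) {t : ℝ} (ht : t ∈ Ioc 0 π) :
    GG b t ≤ 8 * (t/π)^(-(1/4):ℝ) := by
  refine (FF_le h0 h1 (sq_nonneg _) (cossq_lt_one ht)).trans ?_
  have hp : 0 < t/π := div_pos ht.1 pi_pos
  have : (t/π)^(-(1/4):ℝ) = ((t/π)^2)^(-(1/8):ℝ) := by
    rw [← rpow_natCast, ← rpow_mul hp.le]; norm_num
  rw [this]
  gcongr 8 * ?_
  exact rpow_le_rpow_of_nonpos (by positivity) (cossq_lt ht) (by norm_num)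

lemma rint {p : ℝ} (hp : -1 < p) : IntervalIntegrable (fun t => (t/π)^p) volume 0 π := by
  have h := (intervalIntegral.intervalIntegrable_rpow' (a := 0) (b := π) hp).div_const (π^p)
  refine h.congr_uIoo ?_
  intro t ht
  rw [uIoo_of_le pi_pos.le] at ht
  simp only
  rw [div_rpow ht.1.le pi_pos.le]

lemma GG_int {b : ℝ} (h0 : 0 < b) (h1 : b < 1) : IntervalIntegrable (GG b) volume 0 π := by
  refine ((rint (p := -(1/4)) (by norm_num)).const_mul 8).mono_fun (GG_meas b).aestronglyMeasurable ?_
  rw [uIoc_of_le pi_pos.le]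
  filter_upwards [ae_restrict_mem measurableSet_Ioc] with t ht
  rw [norm_of_nonneg (GG_nonneg h0 h1 t)]
  exact (GG_le h0 h1 ht).trans (le_abs_self _)

lemma GG_sq_int {b : ℝ} (h0 : 0 < b) (h1 : b < 1) :
    IntervalIntegrable (fun t => GG b t^2) volume 0 π := by
  refine ((rint (p := -(1/2)) (by norm_num)).const_mul 64).mono_fun
    ((GG_meas b).pow_const 2).aestronglyMeasurable ?_
  rw [uIoc_of_le pi_pos.le]
  filter_upwards [ae_restrict_mem measurableSet_Ioc] with t ht
  rw [norm_of_nonneg (by positivity)]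
  refine le_trans ?_ (le_abs_self _)
  have hp : 0 < t/π := div_pos ht.1 pi_pos
  have : (t/π)^(-(1/2):ℝ) = ((t/π)^(-(1/4):ℝ))^2 := by
    rw [← rpow_natCast, ← rpow_mul hp.le]; norm_num
  rw [this]
  calc GG b t^2 ≤ (8 * (t/π)^(-(1/4):ℝ))^2 := by
        gcongr
        · exact GG_nonneg h0 h1 t
        · exact GG_le h0 h1 ht
    _ = _ := by ring

noncomputable def ww (n : ℕ) (l : ℝ) : ℝ := ∫ t in (0:ℝ)..π, cos (t/2)^(2*n) * cos (l*t)
noncomputable def ss (n : ℕ) (l : ℝ) : ℝ :=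
  ∫ t in (0:ℝ)..π, 2 * sin (t/2) * cos (t/2)^(2*n+1) * sin (l*t)

lemma hd_half (f : ℝ → ℝ) (f' : ℝ) (t : ℝ) (h : HasDerivAt f f' (t/2)) :
    HasDerivAt (fun t => f (t/2)) (f'/2) t := by
  have := h.comp t ((hasDerivAt_id t).div_const 2)
  refine HasDerivAt.congr_deriv this ?_
  ring

lemma hd_lin (f : ℝ → ℝ) (f' l : ℝ) (t : ℝ) (h : HasDerivAt f f' (l*t)) :
    HasDerivAt (fun t => f (l*t)) (f'*l) t := by
  have := h.comp t ((hasDerivAt_id t).const_mul l)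
  refine HasDerivAt.congr_deriv this ?_
  ring

lemma ibp1 (m : ℕ) (l : ℝ) : ((m:ℝ)+1) * ss m l = 2 * l * ww (m+1) l := by
  have h : ∫ t in (0:ℝ)..π, (2 * l * (cos (t/2)^(2*(m+1)) * cos (l*t)) -
      ((m:ℝ)+1) * (2 * sin (t/2) * cos (t/2)^(2*m+1) * sin (l*t))) =
      2 * (cos (π/2)^(2*m+2) * sin (l*π)) - 2 * (cos (0/2)^(2*m+2) * sin (l*0)) := by
    apply intervalIntegral.integral_eq_sub_of_hasDerivAt (f := fun t => 2 * (cos (t/2)^(2*m+2) * sin (l*t)))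
    · intro t _
      have := ((((hd_half _ _ t (hasDerivAt_cos (t/2))).pow (2*m+2)).mul
        (hd_lin _ _ l t (hasDerivAt_sin (l*t)))).const_mul 2)
      refine HasDerivAt.congr_deriv this ?_
      push_cast
      simp only [Pi.pow_apply]
      ring
    · apply Continuous.intervalIntegrable; fun_prop
  rw [intervalIntegral.integral_sub (by apply Continuous.intervalIntegrable; fun_prop)
    (by apply Continuous.intervalIntegrable; fun_prop), intervalIntegral.integral_const_mul,
    intervalIntegral.integral_const_mul] at h
  simp at h
  unfold ss ww
  linarith

lemma ibp2 (m : ℕ) (l : ℝ) : l * ss m l = (2*m+2) * ww (m+1) l - (2*m+1) * ww m l := by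
  have h : ∫ t in (0:ℝ)..π, (l * (2 * sin (t/2) * cos (t/2)^(2*m+1) * sin (l*t)) -
      ((2*m+2) * (cos (t/2)^(2*(m+1)) * cos (l*t)) - (2*m+1) * (cos (t/2)^(2*m) * cos (l*t)))) =
      -2 * (sin (π/2) * cos (π/2)^(2*m+1) * cos (l*π)) -
      -2 * (sin (0/2) * cos (0/2)^(2*m+1) * cos (l*0)) := by
    apply intervalIntegral.integral_eq_sub_of_hasDerivAt
      (f := fun t => -2 * (sin (t/2) * cos (t/2)^(2*m+1) * cos (l*t)))
    · intro t _
      have := ((((hd_half _ _ t (hasDerivAt_sin (t/2))).mul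
        ((hd_half _ _ t (hasDerivAt_cos (t/2))).pow (2*m+1))).mul
        (hd_lin _ _ l t (hasDerivAt_cos (l*t)))).const_mul (-2))
      refine HasDerivAt.congr_deriv this ?_
      push_cast
      simp only [Pi.pow_apply, Pi.mul_apply]
      have e : sin (t/2) ^ 2 = 1 - cos (t/2)^2 := by rw [sin_sq]
      ring_nf
      ring_nf at e
      rw [e]
      ring
    · apply Continuous.intervalIntegrable; fun_prop
  rw [intervalIntegral.integral_sub (by apply Continuous.intervalIntegrable; fun_prop)
    (by apply Continuous.intervalIntegrable; fun_prop),
    intervalIntegral.integral_sub (by apply Continuous.intervalIntegrable; fun_prop)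
    (by apply Continuous.intervalIntegrable; fun_prop), intervalIntegral.integral_const_mul,
    intervalIntegral.integral_const_mul, intervalIntegral.integral_const_mul] at h
  simp at h
  unfold ss ww
  linarith

lemma ss_eq (m : ℕ) (u : ℝ) : ss m u = (ww m (u-1) - ww m (u+1))/2 := by
  unfold ss ww
  rw [← intervalIntegral.integral_sub (by apply Continuous.intervalIntegrable; fun_prop)
    (by apply Continuous.intervalIntegrable; fun_prop), ← intervalIntegral.integral_div]
  congr 1; ext t
  rw [show (u-1)*t = u*t - t by ring, show (u+1)*t = u*t+t by ring, cos_sub, cos_add]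
  have : sin t = 2 * sin (t/2) * cos (t/2) := by rw [← sin_two_mul]; congr 1; ring
  rw [this]; ring

lemma ww_succ (m : ℕ) (u : ℝ) : ww (m+1) u = ww m u / 2 + (ww m (u-1) + ww m (u+1))/4 := by
  unfold ww
  rw [← intervalIntegral.integral_add (by apply Continuous.intervalIntegrable; fun_prop)
    (by apply Continuous.intervalIntegrable; fun_prop), ← intervalIntegral.integral_div,
    ← intervalIntegral.integral_div, ← intervalIntegral.integral_add (by apply Continuous.intervalIntegrable; fun_prop)
    (by apply Continuous.intervalIntegrable; fun_prop)]
  congr 1; ext t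
  rw [show (u-1)*t = u*t - t by ring, show (u+1)*t = u*t+t by ring, cos_sub, cos_add]
  have : cos t = 2 * cos (t/2)^2 - 1 := by rw [← cos_two_mul]; congr 1; ring
  rw [this]; ring

lemma ww_rec (m : ℕ) (l : ℝ) : (((m:ℝ)+1)^2 - l^2) * ww (m+1) l = (m+1) * (m+1/2) * ww m l := by
  have h1 := ibp1 m l
  have h2 := ibp2 m l
  linear_combination (l/2) * h1 - ((m:ℝ)+1)/2 * h2

lemma ww_zero (l : ℝ) : l * ww 0 l = sin (π*l) := by
  have h : ∫ t in (0:ℝ)..π, (l * (cos (t/2)^(2*0) * cos (l*t))) = sin (l*π) - sin (l*0) := by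
    apply intervalIntegral.integral_eq_sub_of_hasDerivAt (f := fun t => sin (l*t))
    · intro t _
      refine HasDerivAt.congr_deriv (hd_lin _ _ l t (hasDerivAt_sin (l*t))) ?_
      ring
    · apply Continuous.intervalIntegrable; fun_prop
  rw [intervalIntegral.integral_const_mul] at h
  unfold ww
  rw [h, mul_comm π]; simp

lemma id_n (n : ℕ) (u : ℝ) : (-(u^2-u) * ww n (u-1) + (u^2+u) * ww n (u+1))/2 =
    2*u*n*ww n u - n*(n+1) * ss n u := by
  cases n with
  | zero =>
    have h1 := ww_zero (u-1)
    have h2 := ww_zero (u+1)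
    rw [show π*(u-1) = π*u - π by ring, sin_sub_pi] at h1
    rw [show π*(u+1) = π*u + π by ring, sin_add_pi] at h2
    push_cast
    linear_combination -u/2*h1+u/2*h2
  | succ m =>
    have h0 := ss_eq m u
    have h0' := ss_eq (m+1) u
    have h1 := ibp1 m u
    have h2 := ibp1 (m+1) u
    have h3 := ww_succ (m+1) u
    have h4 := ww_rec m (u-1)
    have h5 := ww_rec m (u+1)
    push_cast at *
    rw [h3, h0'] at h2
    rw [h0']
    rw [h0] at h1
    linear_combination (1/2) * h4 - (1/2) * h5 + ((m:ℝ)+1/2) * h1 + h2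


noncomputable def cc (b l : ℝ) : ℝ := ∫ t in (0:ℝ)..π, GG b t * cos (l*t)

lemma cc_hasSum {b : ℝ} (h0 : 0 < b) (h1 : b < 1) (l : ℝ) :
    HasSum (fun n => av b n * ww n l) (cc b l) := by
  have h := intervalIntegral.hasSum_integral_of_dominated_convergence (μ := volume) (a := 0) (b := π)
    (F := fun (n : ℕ) t => av b n * (cos (t/2)^(2*n) * cos (l*t)))
    (f := fun t => GG b t * cos (l*t)) (fun n t => av b n * (cos (t/2)^2)^n)
    (fun n => by apply Continuous.aestronglyMeasurable; fun_prop)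
    (fun n => by
      filter_upwards with t _
      rw [norm_mul, norm_mul, norm_of_nonneg (av_nonneg h0 h1 n), pow_mul, norm_of_nonneg (by positivity)]
      have : ‖cos (l*t)‖ ≤ 1 := abs_cos_le_one _
      have h2 := av_nonneg h0 h1 n
      calc _ ≤ av b n * ((cos (t/2)^2)^n * 1) := by gcongr
        _ = _ := by ring)
    (by
      filter_upwards with t ht
      rw [uIoc_of_le pi_pos.le] at ht
      exact FF_summable h0 h1 (sq_nonneg _) (cossq_lt_one ht))
    (GG_int h0 h1)
    (by
      filter_upwards with t ht
      rw [uIoc_of_le pi_pos.le] at ht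
      have := (FF_summable h0 h1 (sq_nonneg _) (cossq_lt_one ht)).hasSum.mul_right (cos (l*t))
      have e : (fun n : ℕ => av b n * (cos (t/2)^(2*n) * cos (l*t))) =
          fun n => av b n * (cos (t/2)^2)^n * cos (l*t) := by
        funext n
        rw [pow_mul]; ring
      rw [e]
      exact this)
  simp only [intervalIntegral.integral_const_mul] at h
  exact h

lemma ww_tendsto (l : ℝ) : Filter.Tendsto (fun n => ww n l) Filter.atTop (nhds 0) := by
  have h := intervalIntegral.tendsto_integral_filter_of_dominated_convergence (μ := volume) (a := 0) (b := π)
    (F := fun (n : ℕ) t => cos (t/2)^(2*n) * cos (l*t)) (f := fun _ => 0) (l := Filter.atTop) (fun _ => 1)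
    (by filter_upwards with n; apply Continuous.aestronglyMeasurable; fun_prop)
    (by
      filter_upwards with n
      filter_upwards with t _
      rw [norm_mul, norm_pow]
      exact mul_le_one₀ (pow_le_one₀ (norm_nonneg _) (abs_cos_le_one _)) (norm_nonneg _) (abs_cos_le_one _))
    (by simp)
    (by
      filter_upwards with t ht
      rw [uIoc_of_le pi_pos.le] at ht
      have := (tendsto_pow_atTop_nhds_zero_of_lt_one (sq_nonneg _) (cossq_lt_one ht)).mul_const (cos (l*t))
      simpa only [pow_mul, zero_mul] using this)
  simpa [ww] using h

lemma cc_rec {b : ℝ} (h0 : 0 < b) (h1 : b < 1) (u : ℝ) :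
    (u-b)*(u+b-1) * cc b (u-1) = (u+b)*(u-b+1) * cc b (u+1) := by
  have hs := ((cc_hasSum h0 h1 (u-1)).mul_left (-((u-b)*(u+b-1)))).add
    ((cc_hasSum h0 h1 (u+1)).mul_left ((u+b)*(u-b+1)))
  set T : ℕ → ℝ := fun n => 4*u*(n * av b n * ww n u) with hT
  have hterm : ∀ n, -((u-b)*(u+b-1)) * (av b n * ww n (u-1)) + (u+b)*(u-b+1) * (av b n * ww n (u+1)) =
      T n - T (n+1) := by
    intro n
    have i1 := id_n n u
    have i2 := ss_eq n u
    have i3 := ibp1 n u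
    have i4 := av_succ b n
    simp only [hT]
    push_cast
    linear_combination (2 * av b n) * i1 + (2*(b*(1-b))*av b n) * i2 -
      2 * (av b (n+1)) * (n+1) * i3 + 2 * ss n u * i4
  simp_rw [hterm] at hs
  have ht := hs.tendsto_sum_nat
  simp_rw [Finset.sum_range_sub'] at ht
  have hT0 : T 0 = 0 := by simp [hT]
  have hTt : Filter.Tendsto T Filter.atTop (nhds 0) := by
    have hw := ((ww_tendsto u).norm).const_mul (|4*u|)
    simp only [norm_zero, mul_zero] at hw
    refine squeeze_zero_norm (fun n => ?_) hw
    simp only [hT]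
    rw [norm_mul (4*u), norm_mul ((n:ℝ) * av b n), norm_eq_abs (4*u)]
    have hn := av_nonneg h0 h1 n
    have : ‖(n:ℝ) * av b n‖ ≤ 1 := by
      rw [norm_of_nonneg (by positivity)]
      have := av_le h0 h1 n
      linarith
    calc _ ≤ |4*u| * (1 * ‖ww n u‖) := by gcongr
      _ = _ := by ring
  rw [hT0] at ht
  have := tendsto_nhds_unique ht (hTt.const_sub 0)
  linarith

lemma cA_div_tsum {b : ℝ} (h0 : 0 < b) :
    ∑' n : ℕ, ENNReal.ofReal (cA n / (b+n)) = ENNReal.ofReal (bt b) := by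
  rw [← bt_lint h0]
  have h : ∀ t ∈ Ioo (0:ℝ) 1, ENNReal.ofReal (t^(b-1) * (1-t)^(-(1/2):ℝ)) =
      ∑' n : ℕ, ENNReal.ofReal (cA n) * ENNReal.ofReal (t^(b+n-1)) := by
    intro t ht
    rw [ENNReal.ofReal_mul (rpow_nonneg ht.1.le _), ← cA_tsum ht.1.le ht.2, ← ENNReal.tsum_mul_left]
    congr 1; ext n
    rw [← ENNReal.ofReal_mul (rpow_nonneg ht.1.le _), ← ENNReal.ofReal_mul (cA_pos n).le]
    congr 1
    rw [show b+n-1 = (b-1)+(n:ℝ) by ring, rpow_add ht.1, rpow_natCast]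
    ring
  rw [setLIntegral_congr_fun measurableSet_Ioo h, lintegral_tsum (by intro i; fun_prop)]
  congr 1; ext n
  rw [lintegral_const_mul _ (by fun_prop), pow_lint, ← ENNReal.ofReal_mul (cA_pos n).le]
  · congr 1
    rw [show b+n-1+1 = b+(n:ℝ) by ring]; ring
  · have : (0:ℝ) ≤ n := by positivity
    linarith

lemma av_ww {b : ℝ} (h0 : 0 < b) (h1 : b < 1) (n : ℕ) :
    av b n * ww n b = sin (π*b) * (cA n / (b+n)) := by
  induction n with
  | zero =>
    have := ww_zero b
    rw [av_zero, ← this]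
    simp [cA, ris]
    field_simp
  | succ n ih =>
    have e1 := ww_rec n b
    have e2 := av_succ b n
    rw [cA_succ]
    have hn : (0:ℝ) ≤ n := by positivity
    have hb : ((n:ℝ)+1-b) ≠ 0 := by linarith
    have hb' : b + n ≠ 0 := by positivity
    have hb2 : b + (n+1) ≠ 0 := by positivity
    have ih' : av b n * ww n b * (b+n) = sin (π*b) * cA n := by
      rw [ih]; field_simp
    have hnn : ((n:ℝ)+1) ≠ 0 := by positivity
    push_cast
    have key : ((n:ℝ)+1-b) * (n+1)^2 * (av b (n+1) * ww (n+1) b * ((b+(n+1)) * (n+1))) =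
      ((n:ℝ)+1-b) * (n+1)^2 * (sin (π*b) * (cA n * (n+1/2))) := by
      linear_combination av b (n+1) * (n+1)^3 * e1 + (n+1)^2 * (n+1/2) * ww n b * e2 +
        ((n:ℝ)+1-b) * (n+1)^2 * (n+1/2) * ih'
    have key2 := mul_left_cancel₀ (by positivity) key
    field_simp
    linear_combination 2 * key2

lemma cc_b {b : ℝ} (h0 : 0 < b) (h1 : b < 1) : cc b b = sin (π*b) * bt b := by
  have h := cc_hasSum h0 h1 b
  simp_rw [av_ww h0 h1] at h
  have hsin : 0 < sin (π*b) := sin_pos_of_pos_of_lt_pi (by positivity) (by nlinarith [pi_pos])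
  have hnn : ∀ n : ℕ, 0 ≤ cA n / (b+n) := fun n => div_nonneg (cA_pos n).le (by positivity)
  have hsum : Summable fun n : ℕ => cA n / (b+n) := by
    have := h.summable.mul_left (sin (π*b))⁻¹
    simpa [← mul_assoc, inv_mul_cancel₀ hsin.ne'] using this
  have e := cA_div_tsum h0
  rw [← ENNReal.ofReal_tsum_of_nonneg hnn hsum, ENNReal.ofReal_eq_ofReal_iff (tsum_nonneg hnn) (bt_pos h0).le] at e
  rw [← h.tsum_eq, tsum_mul_left, e]

lemma cc_pos {b : ℝ} (h0 : 0 < b) (h1 : b < 1) (k : ℕ) :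
    cc b (b+2*k) = sin (π*b) * (cA k * bt (b+k)) := by
  induction k with
  | zero => simp [cc_b h0 h1, cA, ris]
  | succ k ih =>
    have h := cc_rec h0 h1 (b+2*k+1)
    rw [show b+2*(k:ℝ)+1-1 = b+2*k by ring, ih] at h
    rw [cA_succ]
    push_cast
    rw [show b+((k:ℝ)+1) = (b+k)+1 by ring, bt_succ (by positivity)]
    rw [show b+2*(k:ℝ)+1+1 = b + 2*(k+1) by ring] at h
    have hb' : b + k + 1/2 ≠ 0 := by positivity
    have hk : (k:ℝ) + 1 ≠ 0 := by positivity
    clear ih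
    generalize sin (π*b) = z at *
    field_simp
    linear_combination -h/2

lemma cc_neg {b : ℝ} (h0 : 0 < b) (h1 : b < 1) (m : ℕ) : cc b (b-2*(m+1)) = 0 := by
  induction m with
  | zero =>
    have h := cc_rec h0 h1 (b-1)
    rw [show b-1-1 = b - 2*(((0:ℕ):ℝ)+1) by push_cast; ring] at h
    have h2 : (b-1-b)*(b-1+b-1) ≠ 0 := by nlinarith
    have : (b-1-b)*(b-1+b-1) * cc b (b-2*(((0:ℕ):ℝ)+1)) = 0 := by rw [h]; ring
    exact (mul_eq_zero.1 this).resolve_left h2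
  | succ m ih =>
    have h := cc_rec h0 h1 (b-2*(m+1)-1)
    rw [show b-2*((m:ℝ)+1)-1+1 = b-2*(m+1) by ring, ih, mul_zero] at h
    rw [show b-2*((m:ℝ)+1)-1-1 = b-2*(((m+1:ℕ):ℝ)+1) by push_cast; ring] at h
    refine (mul_eq_zero.1 h).resolve_left ?_
    have : (0:ℝ) ≤ m := by positivity
    apply mul_ne_zero
    · linarith
    · linarith


lemma HasSum.congr_term {ι E : Type*} [AddCommMonoid E] [TopologicalSpace E] {f g : ι → E} {a : E}
    (h : HasSum f a) (hfg : ∀ i, f i = g i) : HasSum g a := by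
  rwa [show g = f from (funext hfg).symm]

lemma fcoef (u : ℝ → ℂ) (k : ℤ) [Fact (0 < π)] :
    fourierCoeff (AddCircle.liftIoc π 0 u) k =
      (1/π:ℂ) * ∫ t in (0:ℝ)..π, Complex.exp (-(2*k*t*Complex.I)) * u t := by
  rw [fourierCoeff_liftIoc_eq, fourierCoeffOn_eq_integral]
  simp only [fourier_coe_apply, smul_eq_mul, zero_add, sub_zero, Complex.real_smul]
  push_cast
  congr 1
  congr 1; ext t
  congr 2
  have : (π:ℂ) ≠ 0 := by exact_mod_cast pi_ne_zero
  field_simp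

lemma pars {u v : ℝ → ℂ} (hu : MemLp u 2 (volume.restrict (Ioc 0 π)))
    (hv : MemLp v 2 (volume.restrict (Ioc 0 π))) :
    HasSum (fun k : ℤ => ((1/π:ℂ) * ∫ t in (0:ℝ)..π, Complex.exp (-(2*k*t*Complex.I)) * u t) *
      ∫ t in (0:ℝ)..π, Complex.exp (2*k*t*Complex.I) * v t) (∫ t in (0:ℝ)..π, v t * u t) := by
  have : Fact (0 < π) := ⟨pi_pos⟩
  have hπ : (π:ℂ) ≠ 0 := by exact_mod_cast pi_ne_zero
  have hw : MemLp (fun t => (starRingEnd ℂ) (v t)) 2 (volume.restrict (Ioc 0 π)) := hv.star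
  have hu' : MemLp (AddCircle.liftIoc π 0 u) 2 AddCircle.haarAddCircle :=
    (MemLp.memLp_liftIoc (by simpa using hu)).haarAddCircle
  have hw' : MemLp (AddCircle.liftIoc π 0 (fun t => (starRingEnd ℂ) (v t))) 2 AddCircle.haarAddCircle :=
    (MemLp.memLp_liftIoc (by simpa using hw)).haarAddCircle
  have h := HilbertBasis.hasSum_inner_mul_inner (fourierBasis (T := π)) hw'.toLp hu'.toLp
  have e1 : ∀ i : ℤ, inner ℂ (fourierBasis (T := π) i) (hu'.toLp) =
      (1/π:ℂ) * ∫ t in (0:ℝ)..π, Complex.exp (-(2*i*t*Complex.I)) * u t := by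
    intro i
    rw [← HilbertBasis.repr_apply_apply, fourierBasis_repr, fourierCoeff_congr_ae hu'.coeFn_toLp, fcoef]
  have e2 : ∀ i : ℤ, inner ℂ (hw'.toLp) (fourierBasis (T := π) i) =
      (1/π:ℂ) * ∫ t in (0:ℝ)..π, Complex.exp (2*i*t*Complex.I) * v t := by
    intro i
    rw [← inner_conj_symm, ← HilbertBasis.repr_apply_apply, fourierBasis_repr,
      fourierCoeff_congr_ae hw'.coeFn_toLp, fcoef, map_mul]
    congr 1
    · simp
    · rw [intervalIntegral.integral_of_le pi_pos.le, intervalIntegral.integral_of_le pi_pos.le, ← integral_conj]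
      congr 1; ext t
      rw [map_mul, ← Complex.exp_conj]
      simp [Complex.conj_ofNat]
  have e3 : inner ℂ (hw'.toLp) (hu'.toLp) = (1/π:ℂ) * ∫ t in (0:ℝ)..π, v t * u t := by
    rw [L2.inner_def]
    have : ∫ a, inner ℂ ((hw'.toLp : AddCircle π → ℂ) a) ((hu'.toLp : AddCircle π → ℂ) a) ∂AddCircle.haarAddCircle =
        ∫ a, AddCircle.liftIoc π 0 (fun t => v t * u t) a ∂AddCircle.haarAddCircle := by
      apply integral_congr_ae
      filter_upwards [hu'.coeFn_toLp, hw'.coeFn_toLp] with a h1 h2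
      rw [h1, h2]
      simp [AddCircle.liftIoc, Set.domRestrict_def, mul_comm]
    rw [this, AddCircle.integral_haarAddCircle, AddCircle.integral_liftIoc_eq_intervalIntegral]
    simp
  simp_rw [e1, e2, e3] at h
  have h2 := h.mul_left (π:ℂ)
  rw [← mul_assoc, mul_one_div_cancel hπ, one_mul] at h2
  refine HasSum.congr_term h2 fun k => ?_
  generalize (∫ t in (0:ℝ)..π, Complex.exp (2*k*t*Complex.I) * v t) = X
  generalize (∫ t in (0:ℝ)..π, Complex.exp (-(2*k*t*Complex.I)) * u t) = Y
  field_simp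


noncomputable def hh (b t : ℝ) : ℂ := (GG b t : ℂ) + Complex.exp (π*b*Complex.I) * (GG b (π-t) : ℂ)
noncomputable def EE (b : ℝ) (k : ℕ) : ℝ := 2 * sin (π*b) / π * (cA k * bt (b+k))

lemma norm_expI (x : ℝ) : ‖Complex.exp (x*Complex.I)‖ = 1 := Complex.norm_exp_ofReal_mul_I x

lemma GG_memLp {b : ℝ} (h0 : 0 < b) (h1 : b < 1) :
    MemLp (fun t => (GG b t : ℂ)) 2 (volume.restrict (Ioc 0 π)) := by
  have : MemLp (GG b) 2 (volume.restrict (Ioc 0 π)) := by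
    rw [memLp_two_iff_integrable_sq (GG_meas b).aestronglyMeasurable]
    exact (intervalIntegrable_iff_integrableOn_Ioc_of_le pi_pos.le).1 (GG_sq_int h0 h1)
  exact this.ofReal

lemma GGr_memLp {b : ℝ} (h0 : 0 < b) (h1 : b < 1) :
    MemLp (fun t => (GG b (π-t) : ℂ)) 2 (volume.restrict (Ioc 0 π)) := by
  have : MemLp (fun t => GG b (π-t)) 2 (volume.restrict (Ioc 0 π)) := by
    have hm : Measurable fun t => GG b (π-t) := (GG_meas b).comp (by fun_prop : Measurable fun t : ℝ => π - t)
    rw [memLp_two_iff_integrable_sq hm.aestronglyMeasurable]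
    have := (GG_sq_int h0 h1).comp_sub_left π
    simp only [sub_zero, sub_self] at this
    exact (intervalIntegrable_iff_integrableOn_Ioc_of_le pi_pos.le).1 this.symm
  exact this.ofReal

lemma hh_memLp {b : ℝ} (h0 : 0 < b) (h1 : b < 1) :
    MemLp (hh b) 2 (volume.restrict (Ioc 0 π)) :=
  (GG_memLp h0 h1).add ((GGr_memLp h0 h1).const_mul _)

lemma memLp_mul_le {f g : ℝ → ℂ} (hf : MemLp f 2 (volume.restrict (Ioc 0 π))) (hg : Continuous g)
    (hb : ∀ t, ‖g t‖ ≤ 1) : MemLp (fun t => g t * f t) 2 (volume.restrict (Ioc 0 π)) := by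
  refine hf.of_le (hg.aestronglyMeasurable.mul hf.1) ?_
  filter_upwards with t
  rw [norm_mul]
  calc _ ≤ 1 * ‖f t‖ := by gcongr; exact hb t
    _ = _ := one_mul _

lemma memLp_int {f : ℝ → ℂ} (hf : MemLp f 2 (volume.restrict (Ioc 0 π))) :
    IntervalIntegrable f volume 0 π :=
  (intervalIntegrable_iff_integrableOn_Ioc_of_le pi_pos.le).2 (hf.integrable (by norm_num))

lemma hh_coef {b : ℝ} (h0 : 0 < b) (h1 : b < 1) (k : ℤ) :
    ∫ t in (0:ℝ)..π, Complex.exp (-(((b+2*k:ℝ)*t:ℝ)*Complex.I)) * hh b t = 2 * (cc b (b+2*k) : ℂ) := by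
  set l : ℝ := b + 2*k with hl
  have bd : ∀ t : ℝ, ‖Complex.exp (-((l*t:ℝ)*Complex.I))‖ ≤ 1 := by
    intro t
    rw [← neg_mul, ← Complex.ofReal_neg, norm_expI]
  have bd2 : ∀ t : ℝ, ‖Complex.exp ((l*t:ℝ)*Complex.I)‖ ≤ 1 := by
    intro t
    rw [norm_expI]
  have c1 : Continuous fun t : ℝ => Complex.exp (-((l*t:ℝ)*Complex.I)) := by fun_prop
  have c2 : Continuous fun t : ℝ => Complex.exp ((l*t:ℝ)*Complex.I) := by fun_prop
  have i1 := memLp_int (memLp_mul_le (GG_memLp h0 h1) c1 bd)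
  have i2 := memLp_int (memLp_mul_le (GGr_memLp h0 h1) c1 bd)
  have i3 := memLp_int (memLp_mul_le (GG_memLp h0 h1) c2 bd2)
  have e1 : ∫ t in (0:ℝ)..π, Complex.exp (-((l*t:ℝ)*Complex.I)) * hh b t =
      (∫ t in (0:ℝ)..π, Complex.exp (-((l*t:ℝ)*Complex.I)) * (GG b t : ℂ)) +
      Complex.exp (π*b*Complex.I) *
        ∫ t in (0:ℝ)..π, Complex.exp (-((l*t:ℝ)*Complex.I)) * (GG b (π-t) : ℂ) := by
    rw [← intervalIntegral.integral_const_mul, ← intervalIntegral.integral_add i1 (i2.const_mul _)]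
    congr 1; ext t
    unfold hh; ring
  have e2 : ∫ t in (0:ℝ)..π, Complex.exp (-((l*t:ℝ)*Complex.I)) * (GG b (π-t) : ℂ) =
      Complex.exp (-((l*π:ℝ)*Complex.I)) * ∫ t in (0:ℝ)..π, Complex.exp ((l*t:ℝ)*Complex.I) * (GG b t : ℂ) := by
    have := intervalIntegral.integral_comp_sub_left (a := 0) (b := π)
      (fun s : ℝ => Complex.exp (-((l*(π-s):ℝ)*Complex.I)) * (GG b s : ℂ)) π
    simp only [sub_sub_cancel, sub_self, sub_zero] at this
    rw [this, ← intervalIntegral.integral_const_mul]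
    congr 1; ext t
    rw [← mul_assoc, ← Complex.exp_add]
    congr 2
    push_cast; ring
  have e3 : Complex.exp (π*b*Complex.I) * Complex.exp (-((l*π:ℝ)*Complex.I)) = 1 := by
    rw [← Complex.exp_add, ← Complex.exp_int_mul_two_pi_mul_I (-k)]
    congr 1
    rw [hl]; push_cast; ring
  rw [e1, e2, ← mul_assoc, e3, one_mul, ← intervalIntegral.integral_add i1 i3, cc,
    ← intervalIntegral.integral_ofReal, ← intervalIntegral.integral_const_mul]
  congr 1; ext t
  push_cast
  rw [Complex.cos, neg_mul]
  ring

lemma expand {b : ℝ} (h0 : 0 < b) (h1 : b < 1) {g : ℝ → ℂ} (hg : MemLp g 2 (volume.restrict (Ioc 0 π))) :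
    HasSum (fun k : ℕ => (EE b k : ℂ) * ∫ t in (0:ℝ)..π, Complex.exp (((b+2*k:ℝ)*t:ℝ)*Complex.I) * g t)
      (∫ t in (0:ℝ)..π, g t * hh b t) := by
  have hu := memLp_mul_le (hh_memLp h0 h1) (g := fun t : ℝ => Complex.exp (((-b*t:ℝ))*Complex.I)) (by fun_prop)
    (fun t => (norm_expI _).le)
  have hv := memLp_mul_le hg (g := fun t : ℝ => Complex.exp (((b*t:ℝ))*Complex.I)) (by fun_prop)
    (fun t => (norm_expI _).le)
  have h := pars hu hv
  have e0 : ∫ t in (0:ℝ)..π, Complex.exp (((b*t:ℝ))*Complex.I) * g t *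
      (Complex.exp (((-b*t:ℝ))*Complex.I) * hh b t) = ∫ t in (0:ℝ)..π, g t * hh b t := by
    congr 1; ext t
    have : Complex.exp (((b*t:ℝ))*Complex.I) * Complex.exp (((-b*t:ℝ))*Complex.I) = 1 := by
      rw [← Complex.exp_add, ← Complex.exp_zero]
      congr 1
      push_cast; ring
    linear_combination g t * hh b t * this
  have e1 : ∀ k : ℤ, ∫ t in (0:ℝ)..π, Complex.exp (-(2*k*t*Complex.I)) *
      (Complex.exp (((-b*t:ℝ))*Complex.I) * hh b t) = 2 * (cc b (b+2*k) : ℂ) := by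
    intro k
    rw [← hh_coef h0 h1]
    congr 1; ext t
    rw [← mul_assoc, ← Complex.exp_add]
    congr 2
    push_cast; ring
  have e2 : ∀ k : ℤ, ∫ t in (0:ℝ)..π, Complex.exp (2*k*t*Complex.I) *
      (Complex.exp (((b*t:ℝ))*Complex.I) * g t) =
      ∫ t in (0:ℝ)..π, Complex.exp (((b+2*k:ℝ)*t:ℝ)*Complex.I) * g t := by
    intro k
    congr 1; ext t
    rw [← mul_assoc, ← Complex.exp_add]
    congr 2
    push_cast; ring
  simp_rw [e0, e1, e2] at h
  rw [← (Nat.cast_injective (R := ℤ)).hasSum_iff] at h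
  · refine HasSum.congr_term h fun k => ?_
    simp only [Function.comp_apply, Int.cast_natCast]
    rw [cc_pos h0 h1, EE]
    push_cast
    ring
  · intro k hk
    have hk' : k < 0 := by
      by_contra hc
      exact hk ⟨k.toNat, by simp [Int.toNat_of_nonneg (not_lt.1 hc)]⟩
    obtain ⟨m, hm⟩ := Int.eq_negSucc_of_lt_zero hk'
    have : (b + 2*(k:ℝ)) = b - 2*((m:ℝ)+1) := by
      rw [hm, Int.cast_negSucc]; push_cast; ring
    rw [this, cc_neg h0 h1]
    simp

lemma sinint (l : ℝ) (h1 : l - 1/2 ≠ 0) (h2 : l + 1/2 ≠ 0) :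
    (∫ t in (0:ℝ)..π, Complex.exp ((l*t:ℝ)*Complex.I) * (sin (t/2) : ℂ)).im = -(1/2) * cos (π*l) * qq l := by
  have e : (∫ t in (0:ℝ)..π, Complex.exp ((l*t:ℝ)*Complex.I) * (sin (t/2) : ℂ)).im =
      ∫ t in (0:ℝ)..π, sin (l*t) * sin (t/2) := by
    have := Complex.imCLM.intervalIntegral_comp_comm (a := 0) (b := π) (μ := volume)
      (f := fun t : ℝ => Complex.exp ((l*t:ℝ)*Complex.I) * (sin (t/2) : ℂ))
      (by apply Continuous.intervalIntegrable; fun_prop)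
    simp only [Complex.imCLM_apply] at this
    rw [← this]
    congr 1; ext t
    rw [Complex.im_mul_ofReal, Complex.exp_ofReal_mul_I_im]
  rw [e]
  have h : ∫ t in (0:ℝ)..π, sin (l*t) * sin (t/2) =
      (sin ((l-1/2)*π)/(l-1/2) - sin ((l+1/2)*π)/(l+1/2))/2 -
      (sin ((l-1/2)*0)/(l-1/2) - sin ((l+1/2)*0)/(l+1/2))/2 := by
    apply intervalIntegral.integral_eq_sub_of_hasDerivAt
      (f := fun t => (sin ((l-1/2)*t)/(l-1/2) - sin ((l+1/2)*t)/(l+1/2))/2)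
    · intro t _
      have := (((hd_lin _ _ (l-1/2) t (hasDerivAt_sin ((l-1/2)*t))).div_const (l-1/2)).sub
        ((hd_lin _ _ (l+1/2) t (hasDerivAt_sin ((l+1/2)*t))).div_const (l+1/2))).div_const 2
      refine HasDerivAt.congr_deriv this ?_
      rw [mul_div_cancel_right₀ _ h1, mul_div_cancel_right₀ _ h2,
        show (l-1/2)*t = l*t - t/2 by ring, show (l+1/2)*t = l*t+t/2 by ring, cos_sub, cos_add]
      ring
    · apply Continuous.intervalIntegrable; fun_prop
  rw [h, mul_zero, mul_zero, sin_zero, show (l-1/2)*π = π*l-π/2 by ring,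
    show (l+1/2)*π = π*l+π/2 by ring, sin_sub_pi_div_two, sin_add_pi_div_two, qq]
  ring

noncomputable def XX (b : ℝ) : ℝ := (∫ t in (0:ℝ)..π, (sin (t/2) : ℂ) * hh b t * hh b t).im

lemma sin_bd (t : ℝ) : ‖(sin (t/2) : ℂ)‖ ≤ 1 := by
  rw [Complex.norm_real]
  exact abs_sin_le_one _

lemma hs_memLp {b : ℝ} (h0 : 0 < b) (h1 : b < 1) :
    MemLp (fun t => (sin (t/2) : ℂ) * hh b t) 2 (volume.restrict (Ioc 0 π)) :=
  memLp_mul_le (hh_memLp h0 h1) (by fun_prop) (fun t => sin_bd t)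

lemma XX_sum {b : ℝ} (h0 : 1/4 < b) (h1 : b < 1) (hc : cos (2*π*b) = -(1/2)) :
    ∃ Y : ℕ → ℝ, (∀ k : ℕ, HasSum (fun j : ℕ => EE b j * (1/4 * qq (2*b+2*k+2*j))) (Y k)) ∧
      HasSum (fun k : ℕ => EE b k * Y k) (XX b) := by
  have hb0 : 0 < b := by linarith
  have hs1 : MemLp (fun t => (sin (t/2) : ℂ)) 2 (volume.restrict (Ioc 0 π)) := by
    refine MemLp.of_bound (Continuous.aestronglyMeasurable (by fun_prop)) 1 ?_
    filter_upwards with t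
    exact sin_bd t
  refine ⟨fun k => (∫ t in (0:ℝ)..π, Complex.exp (((b+2*k:ℝ)*t:ℝ)*Complex.I) * ((sin (t/2) : ℂ) * hh b t)).im,
    fun k => ?_, ?_⟩
  · have hg := memLp_mul_le hs1 (g := fun t : ℝ => Complex.exp (((b+2*k:ℝ)*t:ℝ)*Complex.I)) (by fun_prop)
      (fun t => (norm_expI _).le)
    have h := Complex.imCLM.hasSum (expand hb0 h1 hg)
    simp only [Complex.imCLM_apply, Complex.im_ofReal_mul] at h
    simp only [mul_assoc] at h ⊢
    refine HasSum.congr_term h fun j => ?_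
    have e : ∫ t in (0:ℝ)..π, Complex.exp (((b+2*j:ℝ)*t:ℝ)*Complex.I) *
        (Complex.exp (((b+2*k:ℝ)*t:ℝ)*Complex.I) * (sin (t/2) : ℂ)) =
        ∫ t in (0:ℝ)..π, Complex.exp (((2*b+2*k+2*j:ℝ)*t:ℝ)*Complex.I) * (sin (t/2) : ℂ) := by
      congr 1; ext t
      rw [← mul_assoc, ← Complex.exp_add]
      congr 2
      push_cast; ring
    have hk : (0:ℝ) ≤ k := by positivity
    have hj : (0:ℝ) ≤ j := by positivity
    rw [e]
    have := sinint (2*b+2*k+2*j) (by linarith) (by linarith)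
    simp only [mul_assoc] at this
    rw [this]
    have hcos : cos (π*(2*b+(2*k+2*j))) = -(1/2) := by
      rw [← hc, ← cos_add_nat_mul_two_pi (2*π*b) (k+j)]
      congr 1; push_cast; ring
    rw [← add_assoc] at hcos
    rw [hcos]; ring
  · have h := Complex.imCLM.hasSum (expand hb0 h1 (hs_memLp hb0 h1))
    simp only [Complex.imCLM_apply, Complex.im_ofReal_mul] at h
    exact h


noncomputable def wt (b : ℝ) (n : ℕ) : ℝ := cA n * bt (b+n)^2 * bt (2*b+n-1/2)

lemma XX_eq {b : ℝ} (h0 : 1/4 < b) (h1 : b < 1) (hc : cos (2*π*b) = -(1/2)) :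
    XX b = (1/4 * (2*sin (π*b)/π)^2) * ∑' n, wt b n := by
  obtain ⟨Y, hY, hX⟩ := XX_sum h0 h1 hc
  have hb0 : 0 < b := by linarith
  have hS : 0 < sin (π*b) := sin_pos_of_pos_of_lt_pi (by positivity) (by nlinarith [pi_pos])
  have hE : ∀ k, 0 ≤ EE b k := fun k => by
    have := cA_pos k
    have := bt_pos (show 0 < b + (k:ℝ) by positivity)
    unfold EE; positivity
  have hq : ∀ k j : ℕ, 0 ≤ qq (2*b+2*k+2*j) := fun k j => by
    have hk : (0:ℝ) ≤ k := by positivity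
    have hj : (0:ℝ) ≤ j := by positivity
    unfold qq
    have : 0 < 2*b+2*k+2*(j:ℝ) - 1/2 := by linarith
    positivity
  have hw : ∀ n : ℕ, 0 ≤ wt b n := fun n => by
    have hn : (0:ℝ) ≤ n := by positivity
    have := cA_pos n
    have := bt_pos (show 0 < b + (n:ℝ) by positivity)
    have := bt_pos (show 0 < 2*b + (n:ℝ) - 1/2 by linarith)
    unfold wt; positivity
  have hYn : ∀ k, 0 ≤ Y k := fun k => by
    refine (hY k).nonneg fun j => ?_
    have := hq k j; have := hE j; positivity
  have hXn : 0 ≤ XX b := hX.nonneg fun k => mul_nonneg (hE k) (hYn k)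
  have key : ENNReal.ofReal (XX b) = ENNReal.ofReal (1/4 * (2*sin (π*b)/π)^2) * ∑' n, ENNReal.ofReal (wt b n) := by
    have hp := partB h0
    unfold wt
    rw [← hp, ← hX.tsum_eq, ENNReal.ofReal_tsum_of_nonneg (fun k => mul_nonneg (hE k) (hYn k)) hX.summable,
      ← ENNReal.tsum_mul_left]
    congr 1; ext k
    rw [ENNReal.ofReal_mul (hE k), ← (hY k).tsum_eq, ENNReal.ofReal_tsum_of_nonneg
      (fun j => mul_nonneg (hE j) (mul_nonneg (by norm_num) (hq k j))) (hY k).summable, ← ENNReal.tsum_mul_left,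
      ← ENNReal.tsum_mul_left]
    congr 1; ext j
    rw [← ENNReal.ofReal_mul (hE k), ← ENNReal.ofReal_mul (by positivity)]
    congr 1
    unfold EE; ring
  have := congrArg ENNReal.toReal key
  rw [ENNReal.toReal_ofReal hXn, ENNReal.toReal_mul, ENNReal.toReal_ofReal (by positivity),
    ENNReal.tsum_toReal_eq (fun _ => ENNReal.ofReal_ne_top)] at this
  rw [this]
  congr 2; ext n; rw [ENNReal.toReal_ofReal (hw n)]

lemma FF_symm : FF (2/3) = FF (1/3) := by
  ext x; unfold FF av; congr 1; ext n
  rw [show (1:ℝ) - 2/3 = 1/3 by norm_num, show (1:ℝ) - 1/3 = 2/3 by norm_num, mul_comm (ris (2/3) n)]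

lemma GG_symm : GG (2/3) = GG (1/3) := by
  ext x; unfold GG; rw [FF_symm]

lemma GGp_int : IntervalIntegrable (fun t => sin (t/2) * (GG (1/3) t * GG (1/3) (π-t))) volume 0 π := by
  have h := (memLp_mul_le (GG_memLp (b := 1/3) (by norm_num) (by norm_num)) (g := fun t => (sin (t/2):ℂ)) (by fun_prop) sin_bd).integrable_mul
    (GGr_memLp (b := 1/3) (by norm_num) (by norm_num))
  rw [intervalIntegrable_iff_integrableOn_Ioc_of_le pi_pos.le]
  refine h.re.congr ?_
  filter_upwards with t
  simp only [Pi.mul_apply, ← Complex.ofReal_mul]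
  rw [RCLike.re_eq_complex_re, Complex.ofReal_re]; ring

lemma GGq_int : IntervalIntegrable (fun t => sin (t/2) * GG (1/3) (π-t)^2) volume 0 π := by
  have h := (memLp_mul_le (GGr_memLp (b := 1/3) (by norm_num) (by norm_num)) (g := fun t => (sin (t/2):ℂ)) (by fun_prop) sin_bd).integrable_mul
    (GGr_memLp (b := 1/3) (by norm_num) (by norm_num))
  rw [intervalIntegrable_iff_integrableOn_Ioc_of_le pi_pos.le]
  refine h.re.congr ?_
  filter_upwards with t
  simp only [Pi.mul_apply, ← Complex.ofReal_mul]
  rw [RCLike.re_eq_complex_re, Complex.ofReal_re]; ring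

lemma XX_expand {b : ℝ} (h0 : 0 < b) (h1 : b < 1) (hG : GG b = GG (1/3)) :
    XX b = 2*sin (π*b) * (∫ t in (0:ℝ)..π, sin (t/2) * (GG (1/3) t * GG (1/3) (π-t)))
      + sin (2*(π*b)) * ∫ t in (0:ℝ)..π, sin (t/2) * GG (1/3) (π-t)^2 := by
  have hi : IntervalIntegrable (fun t => (sin (t/2) : ℂ) * hh b t * hh b t) volume 0 π := by
    rw [intervalIntegrable_iff_integrableOn_Ioc_of_le pi_pos.le]
    exact (hs_memLp h0 h1).integrable_mul (hh_memLp h0 h1)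
  have e := Complex.imCLM.intervalIntegral_comp_comm hi
  simp only [Complex.imCLM_apply] at e
  unfold XX
  rw [← e, ← intervalIntegral.integral_const_mul, ← intervalIntegral.integral_const_mul,
    ← intervalIntegral.integral_add (GGp_int.const_mul _) (GGq_int.const_mul _)]
  congr 1; ext t
  have hexp : Complex.exp (π*b*Complex.I) = (cos (π*b) : ℂ) + (sin (π*b) : ℂ) * Complex.I := by
    rw [Complex.exp_mul_I]; push_cast; rfl
  unfold hh
  rw [hexp, hG, sin_two_mul]
  simp [Complex.add_re, Complex.add_im, Complex.mul_re, Complex.mul_im, -Complex.ofReal_cos, -Complex.ofReal_sin, Complex.ofReal_re, Complex.ofReal_im]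
  ring

lemma sin_a : sin (π*(1/3)) = √3/2 := by rw [← sin_pi_div_three]; congr 1; ring
lemma cos_a : cos (π*(1/3)) = 1/2 := by rw [← cos_pi_div_three]; congr 1; ring
lemma sin_b : sin (π*(2/3)) = √3/2 := by
  rw [show π*(2/3) = π - π*(1/3) by ring, sin_pi_sub, sin_a]
lemma cos_b : cos (π*(2/3)) = -(1/2) := by
  rw [show π*(2/3) = π - π*(1/3) by ring, cos_pi_sub, cos_a]

lemma final_int : ∫ t in (0:ℝ)..π, sin (t/2) * GG (1/3) (π-t)^2 =
    √3/(4*π^2) * (∑' n, wt (1/3) n - ∑' n, wt (2/3) n) := by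
  have e1 := XX_expand (b := 1/3) (by norm_num) (by norm_num) rfl
  have e2 := XX_expand (b := 2/3) (by norm_num) (by norm_num) GG_symm
  have f1 := XX_eq (b := 1/3) (by norm_num) (by norm_num)
    (by rw [show 2*π*(1/3) = 2*(π*(1/3)) by ring, cos_two_mul, cos_a]; norm_num)
  have f2 := XX_eq (b := 2/3) (by norm_num) (by norm_num)
    (by rw [show 2*π*(2/3) = 2*(π*(2/3)) by ring, cos_two_mul, cos_b]; norm_num)
  rw [sin_two_mul, sin_a, cos_a] at e1
  rw [sin_two_mul, sin_b, cos_b] at e2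
  rw [sin_a] at f1
  rw [sin_b] at f2
  have h3 : √3^2 = 3 := sq_sqrt (by norm_num)
  have h3p : √3 ≠ 0 := by positivity
  have hd : √3 * (∫ t in (0:ℝ)..π, sin (t/2) * GG (1/3) (π-t)^2) = 3/(4*π^2) * (∑' n, wt (1/3) n - ∑' n, wt (2/3) n) := by
    have : (1/4 * (2*(√3/2)/π)^2) = 3/(4*π^2) := by
      rw [show 2*(√3/2)/π = √3/π by ring, div_pow, h3]; ring
    rw [this] at f1 f2
    linear_combination e2 - e1 + f1 - f2
  apply mul_left_cancel₀ h3p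
  rw [hd]
  linear_combination (-(1/(4*π^2)) * (∑' n, wt (1/3) n - ∑' n, wt (2/3) n)) * h3

lemma pFq_FF (x : ℝ) : pFq [1/3, 2/3] [1] x = FF (1/3) x := by
  unfold pFq FF av
  congr 1; ext n
  simp only [List.map_cons, List.map_nil, List.prod_cons, List.prod_nil, ris_one]
  rw [show (1:ℝ) - 1/3 = 2/3 by norm_num]
  have : (n.factorial:ℝ) ≠ 0 := by positivity
  field_simp

lemma img : (fun t : ℝ => sin (t/2)^2) '' Ioo 0 π = Ioo 0 1 := by
  ext x; constructor
  · rintro ⟨t, ⟨h0, h1⟩, rfl⟩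
    have hs := sin_pos_of_pos_of_lt_pi (x := t/2) (by linarith) (by linarith)
    have hc := cos_pos_of_mem_Ioo (x := t/2) ⟨by linarith, by linarith⟩
    refine ⟨by positivity, ?_⟩
    have := sin_sq_add_cos_sq (t/2)
    show sin (t/2)^2 < 1
    nlinarith
  · rintro ⟨h0, h1⟩
    have hs0 : 0 < √x := sqrt_pos.2 h0
    have hs1 : √x < 1 := by rw [sqrt_lt' one_pos]; simpa using h1
    refine ⟨2*arcsin (√x), ⟨by have := arcsin_pos.2 hs0; positivity, ?_⟩, ?_⟩
    · have := arcsin_lt_pi_div_two.2 hs1; linarith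
    · show sin (2*arcsin √x/2)^2 = x
      rw [mul_div_cancel_left₀ _ two_ne_zero, sin_arcsin (by linarith) hs1.le, sq_sqrt h0.le]

lemma subst_int : (∫ x in (0:ℝ)..1, (pFq [1/3, 2/3] [1] x)^2 / √(1 - x)) =
    ∫ t in (0:ℝ)..π, sin (t/2) * GG (1/3) (π-t)^2 := by
  rw [intervalIntegral.integral_of_le zero_le_one, intervalIntegral.integral_of_le pi_pos.le,
    integral_Ioc_eq_integral_Ioo, integral_Ioc_eq_integral_Ioo, ← img]
  rw [integral_image_eq_integral_abs_deriv_smul measurableSet_Ioo (f' := fun t => sin (t/2) * cos (t/2))]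
  · refine setIntegral_congr_fun measurableSet_Ioo ?_
    rintro t ⟨h0, h1⟩
    have hs := sin_pos_of_pos_of_lt_pi (x := t/2) (by linarith) (by linarith)
    have hc := cos_pos_of_mem_Ioo (x := t/2) ⟨by linarith, by linarith⟩
    simp only [smul_eq_mul, pFq_FF]
    rw [abs_of_pos (by positivity), show 1 - sin (t/2)^2 = cos (t/2)^2 by rw [cos_sq'], sqrt_sq hc.le]
    unfold GG
    rw [show (π-t)/2 = π/2 - t/2 by ring, cos_pi_div_two_sub]
    field_simp
  · intro t _
    have := (hd_half sin _ t (hasDerivAt_sin (t/2))).pow 2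
    refine (this.congr_deriv ?_).hasDerivWithinAt
    ring
  · rintro s ⟨h0, h1⟩ t ⟨h2, h3⟩ h
    have hs := sin_pos_of_pos_of_lt_pi (x := s/2) (by linarith) (by linarith)
    have ht := sin_pos_of_pos_of_lt_pi (x := t/2) (by linarith) (by linarith)
    have h' : sin (s/2) = sin (t/2) := (sq_eq_sq₀ hs.le ht.le).1 h
    have := injOn_sin (x₁ := s/2) (x₂ := t/2) ⟨by linarith, by linarith⟩ ⟨by linarith, by linarith⟩ h'
    linarith

lemma LHS_eq : (∫ x in (0:ℝ)..1, (pFq [1/3, 2/3] [1] x)^2 / √(1 - x)) =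
    √3/(4*π^2) * (∑' n, wt (1/3) n - ∑' n, wt (2/3) n) := by
  rw [subst_int, final_int]


lemma wt_one (n : ℕ) : wt (1/3) n = bt (1/3)^2 * bt (1/6) *
    (ris (1/6) n * ris (1/3) n^2 * ris (1/2) n / (ris (2/3) n * ris (5/6) n^2) / n.factorial) := by
  induction n with
  | zero => simp [wt, cA, ris_zero]; norm_num
  | succ n ih =>
    have p1 := (ris_pos (show (0:ℝ) < 2/3 by norm_num) n).ne'
    have p2 := (ris_pos (show (0:ℝ) < 5/6 by norm_num) n).ne'
    have hf : (n.factorial:ℝ) ≠ 0 := by positivity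
    have hn : (0:ℝ) ≤ n := by positivity
    have e : wt (1/3) (n+1) = wt (1/3) n * ((n+1/2)/(n+1) * ((1/3+n)/(5/6+n))^2 * ((1/6+n)/(2/3+n))) := by
      unfold wt
      rw [cA_succ]
      push_cast
      rw [show (1/3:ℝ) + (n+1) = (1/3+n)+1 by ring, bt_succ (by positivity),
        show 2*(1/3:ℝ) + (n+1) - 1/2 = (1/6+n)+1 by ring, bt_succ (by positivity),
        show 2*(1/3:ℝ) + n - 1/2 = (1/6+n) by ring,
        show 1/3+(n:ℝ)+1/2 = 5/6+n by ring, show 1/6+(n:ℝ)+1/2 = 2/3+n by ring]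
      ring
    rw [e, ih]
    simp only [ris_succ, Nat.factorial_succ]
    push_cast
    field_simp
    try ring

lemma wt_two (n : ℕ) : wt (2/3) n = bt (2/3)^2 * bt (5/6) *
    (ris (1/2) n * ris (2/3) n^2 * ris (5/6) n / (ris (7/6) n^2 * ris (4/3) n) / n.factorial) := by
  induction n with
  | zero => simp [wt, cA, ris_zero]; norm_num
  | succ n ih =>
    have p1 := (ris_pos (show (0:ℝ) < 7/6 by norm_num) n).ne'
    have p2 := (ris_pos (show (0:ℝ) < 4/3 by norm_num) n).ne'
    have hf : (n.factorial:ℝ) ≠ 0 := by positivity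
    have hn : (0:ℝ) ≤ n := by positivity
    have e : wt (2/3) (n+1) = wt (2/3) n * ((n+1/2)/(n+1) * ((2/3+n)/(7/6+n))^2 * ((5/6+n)/(4/3+n))) := by
      unfold wt
      rw [cA_succ]
      push_cast
      rw [show (2/3:ℝ) + (n+1) = (2/3+n)+1 by ring, bt_succ (by positivity),
        show 2*(2/3:ℝ) + (n+1) - 1/2 = (5/6+n)+1 by ring, bt_succ (by positivity),
        show 2*(2/3:ℝ) + n - 1/2 = (5/6+n) by ring,
        show 2/3+(n:ℝ)+1/2 = 7/6+n by ring, show 5/6+(n:ℝ)+1/2 = 4/3+n by ring]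
      ring
    rw [e, ih]
    simp only [ris_succ, Nat.factorial_succ]
    push_cast
    field_simp
    try ring

lemma sum_one : ∑' n, wt (1/3) n = bt (1/3)^2 * bt (1/6) * pFq [1/6, 1/3, 1/3, 1/2] [2/3, 5/6, 5/6] 1 := by
  unfold pFq
  rw [← tsum_mul_left]
  congr 1; ext n
  rw [wt_one]
  simp only [List.map_cons, List.map_nil, List.prod_cons, List.prod_nil, one_pow, mul_one]
  ring_nf

lemma sum_two : ∑' n, wt (2/3) n = bt (2/3)^2 * bt (5/6) * pFq [1/2, 2/3, 2/3, 5/6] [7/6, 7/6, 4/3] 1 := by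
  unfold pFq
  rw [← tsum_mul_left]
  congr 1; ext n
  rw [wt_two]
  simp only [List.map_cons, List.map_nil, List.prod_cons, List.prod_nil, one_pow, mul_one]
  ring_nf

lemma gam_rel : ∃ c : ℝ, 0 < c ∧ c^3 = 2 ∧ Gamma (2/3) = 2*√π^2/(√3*Gamma (1/3)) ∧
    Gamma (1/6) = √3 * Gamma (1/3)^2/(c*√π) ∧ Gamma (5/6) = 2*c*√π^3/(√3*Gamma (1/3)^2) := by
  have hg : 0 < Gamma (1/3) := Gamma_pos_of_pos (by norm_num)
  have hA : 0 < Gamma (1/6) := Gamma_pos_of_pos (by norm_num)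
  have hB : 0 < Gamma (2/3) := Gamma_pos_of_pos (by norm_num)
  have hs : 0 < √π := sqrt_pos.2 pi_pos
  have hr : 0 < √3 := by positivity
  have hr2 : √3^2 = 3 := sq_sqrt (by norm_num)
  have hs2 : √π^2 = π := sq_sqrt pi_pos.le
  have h1 := Real.Gamma_mul_Gamma_one_sub (1/3)
  have h2 := Real.Gamma_mul_Gamma_one_sub (1/6)
  have h3 := Real.Gamma_mul_Gamma_add_half (1/6)
  rw [show (1:ℝ) - 1/3 = 2/3 by norm_num, sin_a] at h1
  rw [show (1:ℝ) - 1/6 = 5/6 by norm_num, show π*(1/6) = π/6 by ring, sin_pi_div_six] at h2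
  rw [show (1/6:ℝ) + 1/2 = 2/3 by norm_num, show 2*(1/6:ℝ) = 1/3 by norm_num,
    show (1:ℝ) - 1/3 = 1/3 + 1/3 by norm_num, rpow_add two_pos] at h3
  set c : ℝ := 2^(1/3:ℝ) with hc
  have hc0 : 0 < c := by positivity
  have hc3 : c^3 = 2 := by
    rw [hc, ← rpow_natCast, ← rpow_mul (by norm_num)]; norm_num
  have eB : Gamma (2/3) = 2*√π^2/(√3*Gamma (1/3)) := by
    rw [hs2]; field_simp at h1 ⊢; linarith
  have eA : Gamma (1/6) = √3 * Gamma (1/3)^2/(c*√π) := by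
    rw [eB] at h3
    field_simp at h3 ⊢
    linear_combination (c/2) * h3 + (√3*Gamma (1/3)^2/2) * hc3
  refine ⟨c, hc0, hc3, eB, eA, ?_⟩
  rw [eA] at h2
  field_simp at h2 ⊢
  linear_combination h2 - 2*c*√π*hs2

lemma const_one : √3/(4*π^2) * (bt (1/3)^2 * bt (1/6)) = 9/√π * (√3/64 * (Gamma (1/3)/√π)^9) := by
  obtain ⟨c, hc, hc3, eB, eA, eC⟩ := gam_rel
  have hg : 0 < Gamma (1/3) := Gamma_pos_of_pos (by norm_num)
  have hs : 0 < √π := sqrt_pos.2 pi_pos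
  have hr : 0 < √3 := by positivity
  have hr2 : √3^2 = 3 := sq_sqrt (by norm_num)
  have hr4 : √3^4 = 9 := by rw [show 4 = 2*2 by rfl, pow_mul, hr2]; norm_num
  unfold bt ProbabilityTheory.beta
  rw [show (1/3:ℝ)+1/2 = 5/6 by norm_num, show (1/6:ℝ)+1/2 = 2/3 by norm_num, Gamma_one_half_eq, eB, eA, eC]
  have hs2 : π = √π^2 := (sq_sqrt pi_pos.le).symm
  generalize √π = s at *
  rw [hs2]
  field_simp
  rw [hc3]; simp only [hr4, hr2]
  try ring

lemma const_two : √3/(4*π^2) * (bt (2/3)^2 * bt (5/6)) = 9/√π * (16/3 * (√π/Gamma (1/3))^9) := by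
  obtain ⟨c, hc, hc3, eB, eA, eC⟩ := gam_rel
  have hg : 0 < Gamma (1/3) := Gamma_pos_of_pos (by norm_num)
  have hs : 0 < √π := sqrt_pos.2 pi_pos
  have hr : 0 < √3 := by positivity
  have hr2 : √3^2 = 3 := sq_sqrt (by norm_num)
  have hr4 : √3^4 = 9 := by rw [show 4 = 2*2 by rfl, pow_mul, hr2]; norm_num
  unfold bt ProbabilityTheory.beta
  rw [show (2/3:ℝ)+1/2 = 1/6+1 by norm_num, show (5/6:ℝ)+1/2 = 1/3+1 by norm_num, Gamma_add_one (by norm_num),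
    Gamma_add_one (by norm_num), Gamma_one_half_eq, eB, eA, eC]
  have hs2 : π = √π^2 := (sq_sqrt pi_pos.le).symm
  generalize √π = s at *
  rw [hs2]
  field_simp
  rw [hc3]; simp only [hr4, hr2]
  try ring

theorem laporta_integral_hypergeometric :
    (∫ x in (0:ℝ)..1, (pFq [1/3, 2/3] [1] x)^2 / Real.sqrt (1 - x))
    = (9 / Real.sqrt π) *
        ((Real.sqrt 3 / 64) * (Gamma (1/3) / Real.sqrt π)^9 *
            pFq [1/6, 1/3, 1/3, 1/2] [2/3, 5/6, 5/6] 1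
          - (16/3) * (Real.sqrt π / Gamma (1/3))^9 *
            pFq [1/2, 2/3, 2/3, 5/6] [7/6, 7/6, 4/3] 1) := by
  rw [LHS_eq, sum_one, sum_two]
  linear_combination pFq [1/6, 1/3, 1/3, 1/2] [2/3, 5/6, 5/6] 1 * const_one -
    pFq [1/2, 2/3, 2/3, 5/6] [7/6, 7/6, 4/3] 1 * const_two
end

section
/- ∫₀¹ [₂F₁(1/3,2/3;1|x)]²·(1−x)^{−1/2} dx = (9/2)·₇F₆(1/3,1/3,1/2,1/2,2/3,2/3,5/4; 1/4,5/6,5/6,1,7/6,7/6 | 1). -/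
open Real MeasureTheory Set

lemma ris_add (a : ℝ) (n j : ℕ) : ris a (n + j) = ris a n * ris (a + n) j := by
  induction j with
  | zero => simp [ris_zero]
  | succ j ih => rw [← add_assoc, ris_succ, ris_succ, ih]; push_cast; ring

lemma Gamma_ris {a : ℝ} (ha : 0 < a) (n : ℕ) : Real.Gamma (a + n) = ris a n * Real.Gamma a := by
  induction n with
  | zero => simp [ris_zero]
  | succ n ih =>
    rw [ris_succ, Nat.cast_succ, ← add_assoc, Real.Gamma_add_one (by positivity), ih]; ring

/-- Legendre-type coefficients. -/
noncomputable def VV (n m : ℕ) : ℝ :=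
  ris (1/2) n / n.factorial * m.descFactorial n * m.factorial / ris (1/2) (m + n + 1)

lemma desc_a (m n : ℕ) :
    ((m+1).descFactorial (n+1) : ℝ) = ((m:ℝ) + 1 - n) * (m+1).descFactorial n := by
  rw [Nat.descFactorial_succ]
  rcases le_or_gt n (m+1) with h | h
  · push_cast [Nat.cast_sub h]; ring
  · rw [Nat.descFactorial_eq_zero_iff_lt.2 h]; simp

lemma desc_b (m n : ℕ) :
    (m.descFactorial n : ℝ) = ((m:ℝ) + 1 - n) * (m+1).descFactorial n / (m+1) := by
  rw [← desc_a, Nat.succ_descFactorial_succ]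
  push_cast
  field_simp

lemma tele (m k N : ℕ) :
    ∑ n ∈ Finset.range N, ((4*n+1)/2 * VV n (m+1) * VV n k * ris (1/2) (m+k+2) / (m+k+1).factorial
      - (4*n+1)/2 * VV n m * VV n k * ris (1/2) (m+k+1) / (m+k).factorial)
    = - (N:ℝ)^2 * (k + N + 1/2) / ((m+1) * (m+k+1)) * (ris (1/2) N / N.factorial)^2
      * (m+1).descFactorial N * k.descFactorial N * m.factorial * k.factorial
      / (ris (1/2) (m+N+1) * ris (1/2) (k+N+1)) * ris (1/2) (m+k+1) / (m+k).factorial := by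
  induction N with
  | zero => simp
  | succ N ih =>
    rw [Finset.sum_range_succ, ih]
    have hk : (k.descFactorial (N+1) : ℝ) = ((k:ℝ) - N) * k.descFactorial N := by
      rw [Nat.descFactorial_succ]
      rcases le_or_gt N k with h | h
      · push_cast [Nat.cast_sub h]; ring
      · rw [Nat.descFactorial_eq_zero_iff_lt.2 h]; simp
    unfold VV
    rw [show m + k + 2 = (m+k+1)+1 by ring, show m+1+N+1 = (m+N+1)+1 by ring,
      show m+(N+1)+1 = (m+N+1)+1 by ring, show k+(N+1)+1 = (k+N+1)+1 by ring,
      ris_succ _ (m+k+1), ris_succ _ (m+N+1), ris_succ _ (k+N+1), ris_succ _ N, hk, desc_a,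
      desc_b m N, Nat.factorial_succ m, Nat.factorial_succ (m+k), Nat.factorial_succ N]
    have h1 := ris_pos (a := 1/2) (by norm_num) (m+k+1)
    have h2 := ris_pos (a := 1/2) (by norm_num) (m+N+1)
    have h3 := ris_pos (a := 1/2) (by norm_num) (k+N+1)
    have h4 := ris_pos (a := 1/2) (by norm_num) N
    generalize ris (1/2) (m+k+1) = A at *
    generalize ris (1/2) (m+N+1) = B at *
    generalize ris (1/2) (k+N+1) = C at *
    generalize ris (1/2) N = D at *
    generalize ((m+1).descFactorial N : ℝ) = E
    generalize (k.descFactorial N : ℝ) = F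
    have e1 : (0:ℝ) < (N.factorial : ℝ) := by positivity
    have e2 : (0:ℝ) < (m.factorial : ℝ) := by positivity
    have e3 : (0:ℝ) < (k.factorial : ℝ) := by positivity
    have e4 : (0:ℝ) < ((m+k).factorial : ℝ) := by positivity
    push_cast
    generalize (N.factorial : ℝ) = f1 at *
    generalize (m.factorial : ℝ) = f2 at *
    generalize (k.factorial : ℝ) = f3 at *
    generalize ((m+k).factorial : ℝ) = f4 at *
    clear ih hk
    field_simp
    ring

lemma key (m k N : ℕ) (h : m < N) :
    ∑ n ∈ Finset.range N, (4*n+1)/2 * VV n m * VV n k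
      = (m+k).factorial / ris (1/2) (m+k+1) := by
  induction m generalizing N with
  | zero =>
    obtain ⟨N, rfl⟩ := Nat.exists_eq_succ_of_ne_zero (by omega : N ≠ 0)
    have h3 := ris_pos (a := 1/2) (by norm_num) (k+1)
    rw [Nat.succ_eq_add_one, Finset.sum_range_succ', Finset.sum_eq_zero]
    · simp [VV, ris_zero, ris_succ _ 0]
    · intro n _
      simp [VV]
  | succ m ih =>
    have ht := tele m k N
    have hm : (m+1).descFactorial N = 0 ∨ N = m + 1 := by
      rcases Nat.lt_or_ge (m+1) N with h' | h'
      · left; exact Nat.descFactorial_eq_zero_iff_lt.2 h'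
      · right; omega
    rcases hm with hm | hm
    swap
    · omega
    rw [hm, Finset.sum_sub_distrib, ← Finset.sum_div, ← Finset.sum_mul, ← Finset.sum_div,
      ← Finset.sum_mul, ih N (by omega)] at ht
    have h1 := ris_pos (a := 1/2) (by norm_num) (m+k+1)
    have h2 := ris_pos (a := 1/2) (by norm_num) (m+k+2)
    have e4 : (0:ℝ) < ((m+k).factorial : ℝ) := by positivity
    have e5 : (0:ℝ) < ((m+k+1).factorial : ℝ) := by positivity
    rw [show m+1+k = m+k+1 by ring]
    simp only [Nat.cast_zero, mul_zero, zero_mul, zero_div] at ht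
    field_simp at ht ⊢
    linarith

lemma lint_beta {a b : ℝ} (ha : 0 < a) (hb : 0 < b) :
    ∫⁻ x in Ioo (0:ℝ) 1, ENNReal.ofReal (x^(a-1) * (1-x)^(b-1))
      = ENNReal.ofReal (Real.Gamma a * Real.Gamma b / Real.Gamma (a+b)) := by
  have h := ProbabilityTheory.lintegral_betaPDF_eq_one ha hb
  have hp := ProbabilityTheory.beta_pos ha hb
  rw [ProbabilityTheory.lintegral_betaPDF] at h
  simp_rw [mul_assoc, ENNReal.ofReal_mul (one_div_pos.2 hp).le] at h
  rw [lintegral_const_mul _ (by fun_prop)] at h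
  rw [show Real.Gamma a * Real.Gamma b / Real.Gamma (a+b) = ProbabilityTheory.beta a b from rfl]
  calc _ = ENNReal.ofReal (ProbabilityTheory.beta a b) * (ENNReal.ofReal (1 / ProbabilityTheory.beta a b) * ∫⁻ x in Ioo (0:ℝ) 1, ENNReal.ofReal (x^(a-1) * (1-x)^(b-1))) := by
        rw [← mul_assoc, ← ENNReal.ofReal_mul hp.le, mul_one_div_cancel hp.ne']; simp
    _ = _ := by rw [h, mul_one]

lemma choose_ris (a : ℝ) (n : ℕ) : Ring.choose (a + n - 1) n = ris a n / n.factorial := by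
  have h : n.factorial • Ring.choose (a + n - 1) n = ris a n := by
    rw [Ring.choose, Ring.factorial_nsmul_multichoose_eq_ascPochhammer]
    rw [show a + n - 1 - n + 1 = a by ring]
    induction n with
    | zero => simp [ris_zero]
    | succ n ih => 
      rw [ris_succ, ← ih]
      simp only [Polynomial.ascPochhammer_smeval_eq_eval, ascPochhammer_succ_eval]
  rw [← h, nsmul_eq_mul]; field_simp

lemma hasSum_binom (a : ℝ) {x : ℝ} (h0 : 0 < x) (h1 : x < 1) :
    HasSum (fun n : ℕ => ris a n / n.factorial * x^n) ((1-x)^(-a)) := by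
  have h := (Real.one_div_one_sub_rpow_hasFPowerSeriesOnBall_zero a).hasSum (y := x)
    (by simp [Metric.mem_eball, edist_dist, Real.dist_eq, abs_of_pos h0, h1])
  rw [zero_add] at h
  rw [Real.rpow_neg (by linarith), ← one_div]
  simp only [FormalMultilinearSeries.ofScalars_apply_eq, choose_ris, smul_eq_mul] at h
  exact h

lemma gauss {a b c : ℝ} (ha : 0 < a) (hb : 0 < b) (hc : a + b < c) :
    ∑' j : ℕ, ENNReal.ofReal (ris a j * ris b j / (j.factorial * ris c j))
      = ENNReal.ofReal (Real.Gamma c * Real.Gamma (c-a-b) / (Real.Gamma (c-a) * Real.Gamma (c-b))) := by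
  have g1 := Real.Gamma_pos_of_pos hb
  have g2 := Real.Gamma_pos_of_pos (show 0 < c - b by linarith)
  have g3 := Real.Gamma_pos_of_pos (show 0 < c by linarith)
  have g4 := Real.Gamma_pos_of_pos (show 0 < c - a by linarith)
  have hC : 0 ≤ Real.Gamma c / (Real.Gamma b * Real.Gamma (c-b)) := by positivity
  have step : ∀ j : ℕ, ENNReal.ofReal (ris a j * ris b j / (j.factorial * ris c j))
      = ENNReal.ofReal (Real.Gamma c / (Real.Gamma b * Real.Gamma (c-b))) *
        ∫⁻ x in Ioo (0:ℝ) 1, ENNReal.ofReal (ris a j / j.factorial) * ENNReal.ofReal (x^(b+j-1) * (1-x)^(c-b-1)) := by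
    intro j
    have r1 := ris_pos ha j
    have r2 := ris_pos (show 0 < c by linarith) j
    rw [lintegral_const_mul _ (by fun_prop), lint_beta (by positivity) (by linarith),
      ← ENNReal.ofReal_mul (by positivity), ← ENNReal.ofReal_mul (by positivity), Gamma_ris hb,
      show b + j + (c - b) = c + j by ring, Gamma_ris (by linarith)]
    congr 1
    field_simp
  simp_rw [step]
  rw [ENNReal.tsum_mul_left, ← lintegral_tsum (fun j => by fun_prop)]
  have : ∫⁻ x in Ioo (0:ℝ) 1, ∑' j : ℕ, ENNReal.ofReal (ris a j / j.factorial) * ENNReal.ofReal (x^(b+j-1) * (1-x)^(c-b-1))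
     = ∫⁻ x in Ioo (0:ℝ) 1, ENNReal.ofReal (x^(b-1) * (1-x)^(c-a-b-1)) := by
    refine setLIntegral_congr_fun measurableSet_Ioo ?_
    rintro x ⟨h0, h1⟩
    have hs := hasSum_binom a h0 h1
    have hx : 0 < 1 - x := by linarith
    have hs2 := hs.mul_left (x^(b-1) * (1-x)^(c-b-1))
    simp only
    have : x^(b-1) * (1-x)^(c-a-b-1) = x^(b-1) * (1-x)^(c-b-1) * (1-x)^(-a) := by
      rw [mul_assoc, ← Real.rpow_add hx]; ring_nf
    rw [this, ← hs2.tsum_eq, ENNReal.ofReal_tsum_of_nonneg _ hs2.summable]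
    · congr 1; ext j
      have r1 := ris_pos ha j
      rw [← ENNReal.ofReal_mul (by positivity), show b + j - 1 = (b - 1) + j by ring,
        Real.rpow_add h0, Real.rpow_natCast]
      congr 1; ring
    · intro j
      have r1 := ris_pos ha j
      positivity
  rw [this, lint_beta hb (by linarith), ← ENNReal.ofReal_mul hC]
  congr 1
  rw [show b + (c - a - b) = c - a by ring]
  field_simp

lemma gammaconst : Real.Gamma (5/6) * Real.Gamma (7/6) = π / 3 := by
  have h := Real.Gamma_mul_Gamma_one_sub (1/6)
  rw [show π * (1/6) = π/6 by ring, Real.sin_pi_div_six] at h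
  rw [show (7/6:ℝ) = 1/6 + 1 by norm_num, Real.Gamma_add_one (by norm_num)]
  rw [show (1 - 1/6 : ℝ) = 5/6 by norm_num] at h
  linear_combination (1/6) * h

lemma coef_step (n j : ℕ) : ris (1/3) (j+n) * ris (2/3) (j+n) / ((j+n).factorial)^2 * VV n (j+n)
     = ris (1/2) n / n.factorial * (ris (1/3) n * ris (2/3) n) / ris (1/2) (2*n+1) *
      (ris (1/3+n) j * ris (2/3+n) j / (j.factorial * ris (2*n+3/2) j)) := by
  have hd : ((j.factorial : ℝ)) * ((j+n).descFactorial n : ℝ) = (j+n).factorial := by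
    have := Nat.factorial_mul_descFactorial (show n ≤ j + n by omega)
    rw [Nat.add_sub_cancel] at this
    exact_mod_cast this
  have hd' : ((j+n).descFactorial n : ℝ) = (j+n).factorial / j.factorial := by
    rw [← hd]; field_simp
  have r1 := ris_pos (a := 1/2) (by norm_num) (2*n+1)
  have q1 := ris_pos (a := 2*n+3/2) (by positivity) j
  unfold VV
  rw [hd', show j + n + n + 1 = (2*n+1) + j by ring, add_comm j n, ris_add, ris_add, ris_add _ (2*n+1),
    show ((1:ℝ)/2 + ((2*n+1 : ℕ):ℝ)) = 2*n+3/2 by push_cast; ring]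
  generalize ris (1/2) (2*n+1) = A at *
  generalize ris (2*n+3/2) j = B at *
  have e1 : (0:ℝ) < ((n+j).factorial : ℝ) := by positivity
  generalize ((n+j).factorial : ℝ) = C at *
  field_simp

lemma coef_gam (n : ℕ) : ris (1/2) n / n.factorial * (ris (1/3) n * ris (2/3) n) / ris (1/2) (2*n+1) *
   (Real.Gamma (2*n+3/2) * Real.Gamma (2*n+3/2 - (1/3+n) - (2/3 + n)) /
     (Real.Gamma (2*n+3/2 - (1/3+n)) * Real.Gamma (2*n+3/2 - (2/3+n))))
   = 3 * (ris (1/2) n / n.factorial) * (ris (1/3) n * ris (2/3) n / (ris (5/6) n * ris (7/6) n)) := by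
  rw [show (2*n+3/2 - (1/3+n) - (2/3 + n) : ℝ) = 1/2 by ring,
    show (2*n+3/2 - (1/3+n) : ℝ) = 7/6 + n by ring,
    show (2*n+3/2 - (2/3+n) : ℝ) = 5/6 + n by ring,
    show (2*n+3/2 : ℝ) = 1/2 + ((2*n+1 : ℕ):ℝ) by push_cast; ring,
    Gamma_ris (by norm_num), Gamma_ris (by norm_num), Gamma_ris (by norm_num), Real.Gamma_one_half_eq]
  have hs : √π * √π = π := Real.mul_self_sqrt Real.pi_pos.le
  have g := gammaconst
  have g5 := Real.Gamma_pos_of_pos (show (0:ℝ) < 5/6 by norm_num)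
  have g7 : Real.Gamma (7/6) = π / 3 / Real.Gamma (5/6) := by rw [← g]; field_simp
  have hpi := Real.pi_pos
  have r4 := ris_pos (a := 5/6) (by norm_num) n
  have r5 := ris_pos (a := 7/6) (by norm_num) n
  have r6 := ris_pos (a := 1/2) (by norm_num) (2*n+1)
  rw [show ris (1/2) (2*n+1) * √π * √π = ris (1/2) (2*n+1) * π by rw [mul_assoc, hs], g7]
  generalize ris (1/2) (2*n+1) = A at *
  generalize ris (5/6) n = B at *
  generalize ris (7/6) n = C at *
  generalize Real.Gamma (5/6) = D at *
  clear g g7 hs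
  field_simp

lemma coef (n : ℕ) :
    ∑' m : ℕ, ENNReal.ofReal (ris (1/3) m * ris (2/3) m / (m.factorial)^2 * VV n m)
      = ENNReal.ofReal (3 * (ris (1/2) n / n.factorial) * (ris (1/3) n * ris (2/3) n / (ris (5/6) n * ris (7/6) n))) := by
  have r1 := ris_pos (a := 1/2) (by norm_num) n
  have r2 := ris_pos (a := 1/3) (by norm_num) n
  have r3 := ris_pos (a := 2/3) (by norm_num) n
  have r6 := ris_pos (a := 1/2) (by norm_num) (2*n+1)
  have h0 : ∑ m ∈ Finset.range n, ENNReal.ofReal (ris (1/3) m * ris (2/3) m / (m.factorial)^2 * VV n m) = 0 := by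
    apply Finset.sum_eq_zero
    intro m hm
    simp [VV, Nat.descFactorial_eq_zero_iff_lt.2 (Finset.mem_range.1 hm)]
  have hsplit := Summable.sum_add_tsum_nat_add' (k := n)
    (f := fun m => ENNReal.ofReal (ris (1/3) m * ris (2/3) m / (m.factorial)^2 * VV n m)) ENNReal.summable
  have hC : 0 ≤ ris (1/2) n / n.factorial * (ris (1/3) n * ris (2/3) n) / ris (1/2) (2*n+1) := by positivity
  rw [← hsplit, h0, zero_add]
  simp_rw [coef_step, ENNReal.ofReal_mul hC]
  rw [ENNReal.tsum_mul_left, gauss (by positivity) (by positivity) (by linarith), ← ENNReal.ofReal_mul hC,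
    coef_gam]

/-- coefficients of the 2F1 -/
noncomputable def ff (m : ℕ) : ℝ := ris (1/3) m * ris (2/3) m / (m.factorial)^2

lemma ff_pos (m : ℕ) : 0 < ff m := by
  have r2 := ris_pos (a := 1/3) (by norm_num) m
  have r3 := ris_pos (a := 2/3) (by norm_num) m
  unfold ff; positivity

lemma ff_le (m : ℕ) : ff m ≤ 1 := by
  induction m with
  | zero => simp [ff, ris_zero]
  | succ m ih =>
    have h : ff (m+1) = ff m * ((1/3+m)*(2/3+m)/(m+1)^2) := by
      unfold ff
      rw [ris_succ, ris_succ, Nat.factorial_succ]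
      push_cast
      field_simp
    rw [h]
    have : ((1/3+m)*(2/3+m)/(m+1)^2 : ℝ) ≤ 1 := by
      rw [div_le_one (by positivity)]
      nlinarith [(Nat.cast_nonneg m : (0:ℝ) ≤ m)]
    exact mul_le_one₀ ih (by positivity) this

lemma pFq21 (x : ℝ) : pFq [1/3, 2/3] [1] x = ∑' m, ff m * x^m := by
  unfold pFq ff
  congr 1; ext m
  simp only [List.map_cons, List.map_nil, List.prod_cons, List.prod_nil, mul_one, ris_one]
  ring

lemma VV_nonneg (n m : ℕ) : 0 ≤ VV n m := by
  have r2 := ris_pos (a := 1/2) (by norm_num) n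
  have r3 := ris_pos (a := 1/2) (by norm_num) (m+n+1)
  unfold VV; positivity

lemma key_ennreal (m k : ℕ) :
    ∑' n : ℕ, ENNReal.ofReal ((4*n+1)/2 * VV n m * VV n k)
      = ENNReal.ofReal ((m+k).factorial / ris (1/2) (m+k+1)) := by
  rw [tsum_eq_sum (s := Finset.range (m+1)), ← key m k (m+1) (by omega), ENNReal.ofReal_sum_of_nonneg]
  · intro n _
    have := VV_nonneg n m
    have := VV_nonneg n k
    positivity
  · intro n hn
    have : m < n := by simpa [Nat.lt_succ_iff] using hn
    simp [VV, Nat.descFactorial_eq_zero_iff_lt.2 this]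

lemma moment (j : ℕ) : ∫⁻ x in Ioo (0:ℝ) 1, ENNReal.ofReal (x^j * (√(1-x))⁻¹)
    = ENNReal.ofReal (j.factorial / ris (1/2) (j+1)) := by
  have h := lint_beta (a := j+1) (b := 1/2) (by positivity) (by norm_num)
  have e : Real.Gamma (j+1) * Real.Gamma (1/2) / Real.Gamma (j+1+1/2) = j.factorial / ris (1/2) (j+1) := by
    rw [Real.Gamma_nat_eq_factorial, show ((j:ℝ)+1+1/2) = 1/2 + ((j+1:ℕ):ℝ) by push_cast; ring,
      Gamma_ris (by norm_num)]
    have := Real.Gamma_pos_of_pos (show (0:ℝ) < 1/2 by norm_num)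
    field_simp
  rw [← e, ← h]
  refine setLIntegral_congr_fun measurableSet_Ioo ?_
  rintro x ⟨h0, h1⟩
  simp only
  rw [show ((j:ℝ)+1-1) = j by ring, Real.rpow_natCast, Real.sqrt_eq_rpow,
    ← Real.rpow_neg (by linarith)]
  norm_num

lemma pointwise {x : ℝ} (h0 : 0 < x) (h1 : x < 1) :
    ∑' m : ℕ, ∑' k : ℕ, ENNReal.ofReal (ff m * ff k) * ENNReal.ofReal (x^(m+k) * (√(1-x))⁻¹)
      = ENNReal.ofReal ((pFq [1/3, 2/3] [1] x)^2 / √(1-x)) := by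
  have hsum : Summable fun m => ff m * x^m := by
    refine Summable.of_nonneg_of_le (fun m => by have := ff_pos m; positivity) (fun m => ?_)
      (summable_geometric_of_lt_one h0.le h1)
    exact mul_le_of_le_one_left (by positivity) (ff_le m)
  have hnn : ∀ m, 0 ≤ ff m * x^m := fun m => by have := ff_pos m; positivity
  have hF : ENNReal.ofReal (pFq [1/3, 2/3] [1] x) = ∑' m, ENNReal.ofReal (ff m * x^m) := by
    rw [pFq21, ENNReal.ofReal_tsum_of_nonneg hnn hsum]
  have hF0 : 0 ≤ pFq [1/3, 2/3] [1] x := by rw [pFq21]; exact tsum_nonneg hnn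
  rw [div_eq_mul_inv, ENNReal.ofReal_mul (by positivity), pow_two, ENNReal.ofReal_mul hF0, hF,
    ← ENNReal.tsum_mul_right, ← ENNReal.tsum_mul_right]
  congr 1; ext m
  rw [← ENNReal.tsum_mul_left, ← ENNReal.tsum_mul_right]
  congr 1; ext k
  have a1 := ff_pos m
  have a2 := ff_pos k
  rw [← ENNReal.ofReal_mul (by positivity), ← ENNReal.ofReal_mul (by positivity),
    ← ENNReal.ofReal_mul (by positivity)]
  congr 1
  rw [pow_add]; ring

lemma lhs_lint : ∫⁻ x in Ioo (0:ℝ) 1, (∑' m : ℕ, ∑' k : ℕ, ENNReal.ofReal (ff m * ff k) * ENNReal.ofReal (x^(m+k) * (√(1-x))⁻¹))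
    = ∑' n : ℕ, ENNReal.ofReal ((4*n+1)/2) * (ENNReal.ofReal (3 * (ris (1/2) n / n.factorial) * (ris (1/3) n * ris (2/3) n / (ris (5/6) n * ris (7/6) n))))^2 := by
  have hm : ∀ m k : ℕ, Measurable fun x : ℝ => ENNReal.ofReal (ff m * ff k) * ENNReal.ofReal (x^(m+k) * (√(1-x))⁻¹) := by
    intro m k; fun_prop
  rw [lintegral_tsum (fun m => (Measurable.ennreal_tsum (fun k => hm m k)).aemeasurable)]
  simp_rw [lintegral_tsum (fun k => (hm _ k).aemeasurable)]
  have e1 : ∀ m k : ℕ, ∫⁻ x in Ioo (0:ℝ) 1, ENNReal.ofReal (ff m * ff k) * ENNReal.ofReal (x^(m+k) * (√(1-x))⁻¹)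
      = ∑' n : ℕ, ENNReal.ofReal ((4*n+1)/2) * (ENNReal.ofReal (ff m * VV n m) * ENNReal.ofReal (ff k * VV n k)) := by
    intro m k
    rw [lintegral_const_mul _ (by fun_prop), moment, ← key_ennreal, ← ENNReal.tsum_mul_left]
    congr 1; ext n
    have a1 := ff_pos m
    have a2 := ff_pos k
    have a3 := VV_nonneg n m
    have a4 := VV_nonneg n k
    rw [← ENNReal.ofReal_mul (by positivity), ← ENNReal.ofReal_mul (by positivity),
      ← ENNReal.ofReal_mul (by positivity)]
    congr 1; ring
  simp_rw [e1]
  have e2 : ∀ m : ℕ, ∑' k : ℕ, ∑' n : ℕ, ENNReal.ofReal ((4*n+1)/2) * (ENNReal.ofReal (ff m * VV n m) * ENNReal.ofReal (ff k * VV n k))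
     = ∑' n : ℕ, ENNReal.ofReal ((4*n+1)/2) * (ENNReal.ofReal (ff m * VV n m) * ∑' k, ENNReal.ofReal (ff k * VV n k)) := by
    intro m
    rw [ENNReal.tsum_comm]
    simp_rw [ENNReal.tsum_mul_left]
  simp_rw [e2]
  rw [ENNReal.tsum_comm]
  congr 1; ext n
  rw [ENNReal.tsum_mul_left, ENNReal.tsum_mul_right, ← coef, pow_two]
  rfl

lemma rhs_term (n : ℕ) : ris (5/4) n / ris (1/4) n = 4*n+1 := by
  induction n with
  | zero => simp [ris_zero]
  | succ n ih =>
    have r2 := ris_pos (a := 1/4) (by norm_num) n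
    rw [div_eq_iff (by positivity)] at ih
    rw [ris_succ, ris_succ, ih]
    push_cast
    field_simp
    ring

theorem laporta_integral_7F6 :
    (∫ x in (0:ℝ)..1, (pFq [1/3, 2/3] [1] x)^2 / Real.sqrt (1 - x))
    = (9/2) * pFq [1/3, 1/3, 1/2, 1/2, 2/3, 2/3, 5/4]
        [1/4, 5/6, 5/6, 1, 7/6, 7/6] 1 := by
  have hm : ∀ m k : ℕ, Measurable fun x : ℝ => ENNReal.ofReal (ff m * ff k) * ENNReal.ofReal (x^(m+k) * (√(1-x))⁻¹) := by
    intro m k; fun_prop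
  rw [intervalIntegral.integral_of_le zero_le_one, integral_Ioc_eq_integral_Ioo]
  have h1 : ∫ x in Ioo (0:ℝ) 1, (pFq [1/3, 2/3] [1] x)^2 / Real.sqrt (1 - x)
     = ∫ x in Ioo (0:ℝ) 1, (∑' m : ℕ, ∑' k : ℕ, ENNReal.ofReal (ff m * ff k) * ENNReal.ofReal (x^(m+k) * (√(1-x))⁻¹)).toReal := by
    refine setIntegral_congr_fun measurableSet_Ioo ?_
    rintro x ⟨h0, h1⟩
    simp only
    rw [pointwise h0 h1, ENNReal.toReal_ofReal (by positivity)]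
  rw [h1, integral_toReal, lhs_lint, ENNReal.tsum_toReal_eq]
  · unfold pFq
    rw [← tsum_mul_left]
    congr 1; ext n
    have r1 := ris_pos (a := 1/2) (by norm_num) n
    have r2 := ris_pos (a := 1/3) (by norm_num) n
    have r3 := ris_pos (a := 2/3) (by norm_num) n
    have r4 := ris_pos (a := 5/6) (by norm_num) n
    have r5 := ris_pos (a := 7/6) (by norm_num) n
    have r7 := ris_pos (a := 1/4) (by norm_num) n
    have h4 := rhs_term n
    rw [div_eq_iff (by positivity)] at h4
    rw [ENNReal.toReal_mul, ENNReal.toReal_pow, ENNReal.toReal_ofReal (by positivity),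
      ENNReal.toReal_ofReal (by positivity)]
    simp only [List.map_cons, List.map_nil, List.prod_cons, List.prod_nil, mul_one, ris_one, one_pow]
    rw [h4]
    field_simp
    try ring
  · intro n
    exact ENNReal.mul_ne_top ENNReal.ofReal_ne_top (ENNReal.pow_ne_top ENNReal.ofReal_ne_top)
  · exact (Measurable.ennreal_tsum (fun m => Measurable.ennreal_tsum (fun k => hm m k))).aemeasurable
  · refine (ae_restrict_iff' measurableSet_Ioo).2 (Filter.Eventually.of_forall ?_)
    rintro x ⟨h0, h1⟩
    rw [pointwise h0 h1]
    exact ENNReal.ofReal_lt_top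
end
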